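/- arXiv:math/0601293 — 8 statements merged into one kernel-verified Lean document; each statement's English description precedes it below -/
import Mathlib

section
/- There is an absolute constant c > 0 such that for every integer Δ ≥ 3 there exists N(Δ) such that for all n ≥ N(Δ) with Δ·n even, there exists a simple Δ-regular graph G on n vertices whose queue-number is at least c·√Δ·n^(1/2 − 1/Δ). -/
/-!
The proof is a counting argument with `c = 1 / 50`. Let `m = Δ n / 2` be the number of edges of a
`Δ`-regular graph on `n` vertices.

*Few graphs have a `k`-queue layout.* Fix the vertex ordering. The edges of one queue, written as
pairs (left end, right end), form a chain in the product order, so they are determined by the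
multiset of left ends and the multiset of right ends (`NonNested.ext`): the number of edges in a
lower rectangle is the minimum of the two marginal counts. Hence there are at most
`n! * multichoose (n k) m ^ 2` graphs with `m` edges and a `k`-queue layout
(`card_le_of_hasKQueueLayout`), which is at most `n ^ n * (9 k / Δ) ^ (Δ n)` when `k ≥ Δ`.

*There are many regular graphs.* Write `n = 2 Δ s + r` with `2 Δ < r ≤ 4 Δ`. The `s`-fold lifts of
`K_{Δ,Δ}`, with a fixed `Δ`-regular graph on the remaining `r` vertices added, are
`(s!) ^ (Δ ^ 2)` distinct `Δ`-regular graphs (`exists_family`).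

If all of them had queue-number below `c √Δ n ^ (1/2 - 1/Δ)`, then the first bound would give at
most `((81 / 2500) n / Δ) ^ m` graphs, whereas the family has at least
`(n / (12 Δ)) ^ m / n ^ (2 Δ ^ 2)` members, which is more for large `n`.
-/

/-- The simple graph `G` on `n` vertices admits a `k`-queue layout: there is a
vertex ordering (a permutation `σ` of `Fin n`) and an assignment of the edges to
`k` queues such that no two edges in the same queue are nested, where edges
`{v,w}` and `{x,y}` are nested if, in the ordering, the left endpoint of one is
strictly between the endpoints of the other and likewise for the right endpoint. -/
def HasKQueueLayout (n : ℕ) (G : SimpleGraph (Fin n)) (k : ℕ) : Prop :=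
  ∃ σ : Fin n ≃ Fin n, ∃ q : Sym2 (Fin n) → Fin k,
    ∀ v w x y : Fin n, G.Adj v w → G.Adj x y → q s(v, w) = q s(x, y) →
      ¬ (min (σ v) (σ w) < min (σ x) (σ y) ∧ max (σ x) (σ y) < max (σ v) (σ w))

section Auxiliary

open Finset

/-! ### Graphs with queue layouts are determined by two multisets -/

theorem HasKQueueLayout.mono {n k l : ℕ} {G : SimpleGraph (Fin n)} (h : HasKQueueLayout n G k)
    (hkl : k ≤ l) : HasKQueueLayout n G l := by
  obtain ⟨σ, q, hq⟩ := h
  refine ⟨σ, fun e => Fin.castLE hkl (q e), fun v w x y h1 h2 h3 => hq v w x y h1 h2 ?_⟩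
  exact Fin.castLE_injective hkl h3

/-- A set of coloured intervals `(left end, right end, colour)` in which no interval lies strictly
inside another one of the same colour. -/
def NonNested {α κ : Type*} [LinearOrder α] (T : Finset (α × α × κ)) : Prop :=
  ∀ t ∈ T, ∀ u ∈ T, t.2.2 = u.2.2 → ¬ (t.1 < u.1 ∧ u.2.1 < t.2.1)

/-- Among the intervals of one colour, the ones with left end in a lower set `A` and the ones with
right end in a lower set `B` are comparable under inclusion, since elements of the two differences
would be nested. Hence the number with both properties is the smaller of the two numbers. -/
theorem card_rect {α κ : Type*} [LinearOrder α] [DecidableEq κ] {T : Finset (α × α × κ)}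
    (hT : NonNested T) (c : κ) (A B : α → Prop) [DecidablePred A] [DecidablePred B]
    (hA : ∀ x y, x ≤ y → A y → A x) (hB : ∀ x y, x ≤ y → B y → B x) :
    #{t ∈ T | t.2.2 = c ∧ A t.1 ∧ B t.2.1} =
      min (#{t ∈ T | t.2.2 = c ∧ A t.1}) (#{t ∈ T | t.2.2 = c ∧ B t.2.1}) := by
  by_cases h : ∀ t ∈ T, t.2.2 = c → A t.1 → B t.2.1
  · have h1 : {t ∈ T | t.2.2 = c ∧ A t.1 ∧ B t.2.1} = {t ∈ T | t.2.2 = c ∧ A t.1} := by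
      ext t; simp only [mem_filter]; have := h t; tauto
    rw [h1, min_eq_left]
    apply card_le_card
    intro t; simp only [mem_filter]; have := h t; tauto
  · push Not at h
    obtain ⟨t, ht, htc, htA, htB⟩ := h
    have h : ∀ u ∈ T, u.2.2 = c → B u.2.1 → A u.1 := by
      intro u hu huc huB
      by_contra huA
      refine hT t ht u hu (htc.trans huc.symm) ⟨?_, ?_⟩
      · by_contra hlt; exact huA (hA _ _ (not_lt.mp hlt) htA)
      · by_contra hlt; exact htB (hB _ _ (not_lt.mp hlt) huB)
    have h1 : {t ∈ T | t.2.2 = c ∧ A t.1 ∧ B t.2.1} = {t ∈ T | t.2.2 = c ∧ B t.2.1} := by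
      ext t; simp only [mem_filter]; have := h t; tauto
    rw [h1, min_eq_right]
    apply card_le_card
    intro t; simp only [mem_filter]; have := h t; tauto

/-- Inclusion–exclusion: membership of a single triple is decided by the sizes of four lower
rectangles. -/
theorem mem_iff_rect {α κ : Type*} [LinearOrder α] [DecidableEq κ] (T : Finset (α × α × κ))
    (a b : α) (c : κ) : (a, b, c) ∈ T ↔
      #{t ∈ T | t.2.2 = c ∧ t.1 < a ∧ t.2.1 ≤ b} + #{t ∈ T | t.2.2 = c ∧ t.1 ≤ a ∧ t.2.1 < b} <
      #{t ∈ T | t.2.2 = c ∧ t.1 ≤ a ∧ t.2.1 ≤ b} + #{t ∈ T | t.2.2 = c ∧ t.1 < a ∧ t.2.1 < b} := by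
  have hU : {t ∈ T | t.2.2 = c ∧ t.1 < a ∧ t.2.1 ≤ b} ∪ {t ∈ T | t.2.2 = c ∧ t.1 ≤ a ∧ t.2.1 < b}
      = {t ∈ T | t.2.2 = c ∧ t.1 ≤ a ∧ t.2.1 ≤ b}.erase (a, b, c) := by
    ext ⟨x, y, z⟩
    simp only [mem_union, mem_filter, mem_erase, ne_eq, Prod.mk.injEq]
    grind
  have hI : {t ∈ T | t.2.2 = c ∧ t.1 < a ∧ t.2.1 ≤ b} ∩ {t ∈ T | t.2.2 = c ∧ t.1 ≤ a ∧ t.2.1 < b}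
      = {t ∈ T | t.2.2 = c ∧ t.1 < a ∧ t.2.1 < b} := by
    ext ⟨x, y, z⟩
    simp only [mem_inter, mem_filter]
    grind
  rw [← card_union_add_card_inter, hU, hI, Nat.add_lt_add_iff_right]
  refine ⟨fun h => card_erase_lt_of_mem (by simp [h]), fun h => ?_⟩
  by_contra hn
  rw [erase_eq_of_notMem (by simp [hn])] at h
  exact lt_irrefl _ h

/-- A non-nested set is determined by its multiset of coloured left ends together with its multiset
of coloured right ends. -/
theorem NonNested.ext {α κ : Type*} [LinearOrder α] [DecidableEq κ] {T T' : Finset (α × α × κ)}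
    (hT : NonNested T) (hT' : NonNested T')
    (hL : T.val.map (fun t => (t.1, t.2.2)) = T'.val.map (fun t => (t.1, t.2.2)))
    (hR : T.val.map (fun t => t.2) = T'.val.map (fun t => t.2)) : T = T' := by
  have cL : ∀ (c : κ) (A : α → Prop) [DecidablePred A],
      #{t ∈ T | t.2.2 = c ∧ A t.1} = #{t ∈ T' | t.2.2 = c ∧ A t.1} := by
    intro c A _
    have := congrArg (Multiset.countP (fun p : α × κ => p.2 = c ∧ A p.1)) hL
    simpa only [Multiset.countP_map, Finset.card_def, Finset.filter_val] using this
  have cR : ∀ (c : κ) (A : α → Prop) [DecidablePred A],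
      #{t ∈ T | t.2.2 = c ∧ A t.2.1} = #{t ∈ T' | t.2.2 = c ∧ A t.2.1} := by
    intro c A _
    have := congrArg (Multiset.countP (fun p : α × κ => p.2 = c ∧ A p.1)) hR
    simpa only [Multiset.countP_map, Finset.card_def, Finset.filter_val] using this
  have hle : ∀ a x y : α, x ≤ y → y ≤ a → x ≤ a := fun a x y => le_trans
  have hlt : ∀ a x y : α, x ≤ y → y < a → x < a := fun a x y => lt_of_le_of_lt
  ext ⟨a, b, c⟩
  rw [mem_iff_rect, mem_iff_rect,
    card_rect hT c (· < a) (· ≤ b) (hlt a) (hle b), card_rect hT' c (· < a) (· ≤ b) (hlt a) (hle b),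
    card_rect hT c (· ≤ a) (· < b) (hle a) (hlt b), card_rect hT' c (· ≤ a) (· < b) (hle a) (hlt b),
    card_rect hT c (· ≤ a) (· ≤ b) (hle a) (hle b), card_rect hT' c (· ≤ a) (· ≤ b) (hle a) (hle b),
    card_rect hT c (· < a) (· < b) (hlt a) (hlt b), card_rect hT' c (· < a) (· < b) (hlt a) (hlt b)]
  simp only [cL c (· ≤ a), cL c (· < a), cR c (· ≤ b), cR c (· < b)]

open Classical in
/-- The edges of `G` as triples (left end, right end, queue), with the ends being positions in the
vertex ordering `σ`. -/
noncomputable def layoutTriples {n k : ℕ} (G : SimpleGraph (Fin n)) (σ : Fin n ≃ Fin n)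
    (q : Sym2 (Fin n) → Fin k) : Finset (Fin n × Fin n × Fin k) :=
  {t | t.1 < t.2.1 ∧ G.Adj (σ.symm t.1) (σ.symm t.2.1) ∧
    q s(σ.symm t.1, σ.symm t.2.1) = t.2.2}

theorem mem_layoutTriples {n k : ℕ} {G : SimpleGraph (Fin n)} {σ : Fin n ≃ Fin n}
    {q : Sym2 (Fin n) → Fin k} {t : Fin n × Fin n × Fin k} :
    t ∈ layoutTriples G σ q ↔ t.1 < t.2.1 ∧ G.Adj (σ.symm t.1) (σ.symm t.2.1) ∧
      q s(σ.symm t.1, σ.symm t.2.1) = t.2.2 := by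
  simp [layoutTriples]

open Classical in
theorem card_layoutTriples {n k : ℕ} (G : SimpleGraph (Fin n)) (σ : Fin n ≃ Fin n)
    (q : Sym2 (Fin n) → Fin k) : #(layoutTriples G σ q) = #G.edgeFinset := by
  refine card_bij (fun t _ => s(σ.symm t.1, σ.symm t.2.1)) ?_ ?_ ?_
  · intro t ht
    rw [mem_layoutTriples] at ht
    simpa using ht.2.1
  · rintro ⟨a, b, c⟩ h1 ⟨a', b', c'⟩ h2 h
    rw [mem_layoutTriples] at h1 h2
    have hc : c = c' := h1.2.2.symm.trans ((congrArg q h).trans h2.2.2)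
    simp only [Sym2.eq_iff, EmbeddingLike.apply_eq_iff_eq] at h
    rcases h with ⟨rfl, rfl⟩ | ⟨rfl, rfl⟩
    · rw [hc]
    · exact absurd h1.1 (not_lt.mpr h2.1.le)
  · intro e he
    induction e with | h v w =>
    have hvw : G.Adj v w := by simpa using he
    rcases lt_or_gt_of_ne (fun h => hvw.ne (σ.injective h)) with h | h
    · exact ⟨(σ v, σ w, q s(v, w)), by simp [mem_layoutTriples, h, hvw], by simp⟩
    · exact ⟨(σ w, σ v, q s(w, v)), by simp [mem_layoutTriples, h, hvw.symm], by simp [Sym2.eq_swap]⟩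

theorem adj_of_layoutTriples_eq {n k : ℕ} {G G' : SimpleGraph (Fin n)} {σ : Fin n ≃ Fin n}
    {q q' : Sym2 (Fin n) → Fin k} (h : layoutTriples G σ q = layoutTriples G' σ q')
    {v w : Fin n} (hvw : G.Adj v w) : G'.Adj v w := by
  wlog hlt : σ v < σ w generalizing v w
  · exact (this hvw.symm ((lt_or_gt_of_ne fun h => hvw.ne (σ.injective h)).resolve_left hlt)).symm
  have : (σ v, σ w, q s(v, w)) ∈ layoutTriples G' σ q' := by
    rw [← h]; simp [mem_layoutTriples, hlt, hvw]
  rw [mem_layoutTriples] at this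
  simpa using this.2.1

open Classical in
/-- The encoding bound: a family of distinct graphs with `m` edges and `k`-queue layouts embeds into
triples consisting of a permutation and two multisets of size `m` over `Fin n × Fin k`. -/
theorem card_le_of_hasKQueueLayout {X : Type*} [Fintype X] {n m k : ℕ}
    (F : X → SimpleGraph (Fin n)) (hF : Function.Injective F)
    (hm : ∀ x, #(F x).edgeFinset = m) (hk : ∀ x, HasKQueueLayout n (F x) k) :
    Fintype.card X ≤ n.factorial * ((n * k).multichoose m * (n * k).multichoose m) := by
  choose σ q hq using hk
  have hN : ∀ x, NonNested (layoutTriples (F x) (σ x) (q x)) := by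
    intro x t ht u hu htu
    rw [mem_layoutTriples] at ht hu
    have := hq x _ _ _ _ ht.2.1 hu.2.1 (by rw [ht.2.2, hu.2.2, htu])
    simpa [min_eq_left ht.1.le, min_eq_left hu.1.le, max_eq_right ht.1.le,
      max_eq_right hu.1.le] using this
  let enc : X → Equiv.Perm (Fin n) × Sym (Fin n × Fin k) m × Sym (Fin n × Fin k) m := fun x =>
    (σ x, ⟨(layoutTriples (F x) (σ x) (q x)).val.map (fun t => (t.1, t.2.2)), by
        rw [Multiset.card_map, ← hm x, ← card_layoutTriples (F x) (σ x) (q x)]; rfl⟩,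
      ⟨(layoutTriples (F x) (σ x) (q x)).val.map (fun t => t.2), by
        rw [Multiset.card_map, ← hm x, ← card_layoutTriples (F x) (σ x) (q x)]; rfl⟩)
  have hinj : Function.Injective enc := by
    intro x y hxy
    have h1 : σ x = σ y := congrArg (fun p => p.1) hxy
    have hT := (hN x).ext (hN y) (congrArg (fun p => p.2.1.val) hxy)
      (congrArg (fun p => p.2.2.val) hxy)
    rw [← h1] at hT
    apply hF
    ext v w
    exact ⟨adj_of_layoutTriples_eq hT, adj_of_layoutTriples_eq hT.symm⟩
  have := Fintype.card_le_of_injective enc hinj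
  simpa [Fintype.card_prod, Fintype.card_perm, Sym.card_sym_eq_multichoose] using this

/-! ### A large family of regular graphs -/

/-- The circulant graph with connection set `S` is regular of degree `#S`. -/
theorem exists_circulant (r : ℕ) [NeZero r] (S : Finset (ZMod r)) (h0 : 0 ∉ S)
    (hS : ∀ x ∈ S, -x ∈ S) :
    ∃ G : SimpleGraph (ZMod r), ∀ v, (G.neighborSet v).ncard = #S := by
  let G : SimpleGraph (ZMod r) :=
    { Adj := fun v w => w - v ∈ S
      symm := ⟨fun v w h => by simpa using hS _ h⟩
      loopless := ⟨fun v => by simpa using h0⟩ }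
  refine ⟨G, fun v => ?_⟩
  have : G.neighborSet v = (S.map (addRightEmbedding v) : Finset (ZMod r)) := by
    ext w
    simp [G, SimpleGraph.mem_neighborSet, ← sub_eq_add_neg]
  rw [this, Set.ncard_coe_finset, card_map]

/-- A regular graph on few vertices, which fills up the vertices left over by `liftGraph`. For even
`Δ` it is the circulant of the `Δ / 2` shortest distances, and for odd `Δ` (hence even `r`) that of an
interval of residues centred at `r / 2`. -/
theorem exists_regular (Δ r : ℕ) (hr : 2 * Δ + 1 ≤ r) (he : Even (Δ * r)) :
    ∃ G : SimpleGraph (Fin r), ∀ v, (G.neighborSet v).ncard = Δ := by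
  obtain ⟨r, rfl⟩ : ∃ s, r = s + 1 := ⟨r - 1, by omega⟩
  have key : ∀ T : Finset ℕ, (∀ a ∈ T, 0 < a ∧ a < r + 1 ∧ r + 1 - a ∈ T) → #T = Δ →
      ∃ G : SimpleGraph (Fin (r + 1)), ∀ v, (G.neighborSet v).ncard = Δ := by
    intro T hT hc
    -- `S` is the set of residues represented by `T`; the hypothesis on `T` makes `S` symmetric.
    let S : Finset (ZMod (r + 1)) := univ.filter (fun x => x.val ∈ T)
    have hcS : #S = #T := by
      refine card_nbij' (fun x => x.val) (fun a => (a : ZMod (r + 1))) ?_ ?_ ?_ ?_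
      · intro x hx; simpa [S] using hx
      · intro a ha; simpa [S, ZMod.val_cast_of_lt (hT a ha).2.1] using ha
      · intro x _; simp
      · intro a ha; simp [ZMod.val_cast_of_lt (hT a ha).2.1]
    rw [← hc, ← hcS]
    refine exists_circulant (r + 1) S ?_ ?_
    · intro h
      have := (hT _ (by simpa [S] using h)).1
      simp at this
    · intro x hx
      have hx' : x.val ∈ T := by simpa [S] using hx
      have hx0 : x ≠ 0 := by
        rintro rfl
        have := (hT _ hx').1
        simp at this
      have : NeZero x := ⟨hx0⟩
      simpa [S, ZMod.val_neg_of_ne_zero] using (hT _ hx').2.2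
  by_cases h : Even Δ
  · obtain ⟨d, rfl⟩ := h
    refine key (Icc 1 d ∪ Icc (r + 1 - d) r) ?_ ?_
    · intro a ha
      simp only [mem_union, mem_Icc] at ha ⊢
      omega
    · rw [card_union_of_disjoint]
      · simp; omega
      · rw [disjoint_left]
        intro a ha hb
        simp only [mem_Icc] at ha hb
        omega
  · obtain ⟨p, hp⟩ := (Nat.even_mul.mp he).resolve_left h
    obtain ⟨d, rfl⟩ := Nat.not_even_iff_odd.mp h
    refine key (Icc (p - d) (p + d)) ?_ ?_
    · intro a ha
      simp only [mem_Icc] at ha ⊢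
      omega
    · simp; omega

/-- The `s`-fold lift of the complete bipartite graph `K_{Δ,Δ}` with permutation `π (i, j)` on the
edge `(i, j)`, together with a disjoint copy of `H`. -/
def liftGraph {Δ s r : ℕ} (H : SimpleGraph (Fin r)) (π : Fin Δ × Fin Δ → Equiv.Perm (Fin s)) :
    SimpleGraph (((Fin Δ × Fin s) ⊕ (Fin Δ × Fin s)) ⊕ Fin r) where
  Adj
    | .inl (.inl (i, a)), .inl (.inr (j, b)) => π (i, j) a = b
    | .inl (.inr (j, b)), .inl (.inl (i, a)) => π (i, j) a = b
    | .inr x, .inr y => H.Adj x y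
    | _, _ => False
  symm := ⟨by
    rintro ((⟨i, a⟩ | ⟨i, a⟩) | x) ((⟨j, b⟩ | ⟨j, b⟩) | y) h <;>
      first | exact h | exact SimpleGraph.Adj.symm (G := H) h⟩
  loopless := ⟨by
    rintro ((⟨i, a⟩ | ⟨i, a⟩) | x) h
    · exact h
    · exact h
    · exact H.irrefl h⟩

theorem liftGraph_injective {Δ s r : ℕ} (H : SimpleGraph (Fin r)) :
    Function.Injective (liftGraph (Δ := Δ) (s := s) H) := by
  intro π π' h
  funext ⟨i, j⟩
  ext1 a
  have : (liftGraph H π').Adj (.inl (.inl (i, a))) (.inl (.inr (j, π (i, j) a))) := by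
    rw [← h]; exact rfl
  exact Eq.symm this

theorem ncard_neighborSet_liftGraph {Δ s r : ℕ} (H : SimpleGraph (Fin r))
    (hH : ∀ v, (H.neighborSet v).ncard = Δ) (π : Fin Δ × Fin Δ → Equiv.Perm (Fin s)) (v) :
    ((liftGraph H π).neighborSet v).ncard = Δ := by
  obtain (⟨i, a⟩ | ⟨j, b⟩) | x := v
  · have : (liftGraph H π).neighborSet (.inl (.inl (i, a))) =
        Set.range (fun j => Sum.inl (Sum.inr (j, π (i, j) a))) := by
      ext ((⟨j, b⟩ | ⟨j, b⟩) | y) <;> simp [liftGraph]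
    rw [this, ← Set.image_univ, Set.ncard_image_of_injective, Set.ncard_univ, Nat.card_fin]
    intro j j' h
    simp at h
    exact h.1
  · have : (liftGraph H π).neighborSet (.inl (.inr (j, b))) =
        Set.range (fun i => Sum.inl (Sum.inl (i, (π (i, j)).symm b))) := by
      ext ((⟨i, a⟩ | ⟨i, a⟩) | y) <;> simp [liftGraph, Equiv.symm_apply_eq, @eq_comm _ b]
    rw [this, ← Set.image_univ, Set.ncard_image_of_injective, Set.ncard_univ, Nat.card_fin]
    intro j j' h
    simp at h
    exact h.1
  · have : (liftGraph H π).neighborSet (.inr x) = Sum.inr '' H.neighborSet x := by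
      ext ((⟨i, a⟩ | ⟨i, a⟩) | y) <;> simp [liftGraph]
    rw [this, Set.ncard_image_of_injective _ Sum.inr_injective, hH]

theorem exists_family (Δ s r n : ℕ) (hn : 2 * (Δ * s) + r = n) (hr : 2 * Δ + 1 ≤ r)
    (he : Even (Δ * n)) :
    ∃ F : (Fin Δ × Fin Δ → Equiv.Perm (Fin s)) → SimpleGraph (Fin n),
      Function.Injective F ∧ ∀ π v, ((F π).neighborSet v).ncard = Δ := by
  have her : Even (Δ * r) := by
    rw [← hn, mul_add] at he
    exact (Nat.even_add.mp he).mp ((even_two_mul _).mul_left _)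
  obtain ⟨H, hH⟩ := exists_regular Δ r hr her
  have e : (((Fin Δ × Fin s) ⊕ (Fin Δ × Fin s)) ⊕ Fin r) ≃ Fin n :=
    Fintype.equivFinOfCardEq (by simp; omega)
  refine ⟨fun π => (liftGraph H π).comap e.symm, ?_, ?_⟩
  · intro π π' h
    apply liftGraph_injective H
    ext v w
    have := congrArg (fun G => G.Adj (e v) (e w)) h
    simpa using this
  · intro π v
    refine Eq.trans ?_ (ncard_neighborSet_liftGraph H hH π (e.symm v))
    rw [← Set.ncard_image_of_injective _ e.injective]
    congr 1
    ext w
    simp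

open Classical in
theorem card_edgeFinset_of_regular {n Δ m : ℕ} (G : SimpleGraph (Fin n)) (hm : Δ * n = 2 * m)
    (h : ∀ v, (G.neighborSet v).ncard = Δ) : #G.edgeFinset = m := by
  have h1 := G.sum_degrees_eq_twice_card_edges
  have h2 : ∀ v, G.degree v = Δ := by
    intro v
    rw [← h v, Set.ncard_eq_toFinset_card', ← SimpleGraph.card_neighborFinset_eq_degree]
    rfl
  simp only [h2, sum_const, card_univ, Fintype.card_fin, smul_eq_mul] at h1
  have : n * Δ = 2 * m := by rw [mul_comm]; exact hm
  have h3 : 2 * #G.edgeFinset = 2 * m := by rw [← this, h1]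
  omega

/-! ### Numerical estimates -/

theorem div_three_pow_le_factorial (s : ℕ) : ((s : ℝ) / 3) ^ s ≤ s.factorial := by
  have h1 := Real.pow_div_factorial_le_exp (s : ℝ) s.cast_nonneg s
  have h2 : Real.exp s ≤ 3 ^ s := by
    rw [← Real.exp_one_pow]
    exact pow_le_pow_left₀ (Real.exp_pos _).le (by linarith [Real.exp_one_lt_d9]) s
  have h3 : (0 : ℝ) < s.factorial := by exact_mod_cast s.factorial_pos
  rw [div_pow, div_le_iff₀ (by positivity)]
  rw [div_le_iff₀ h3] at h1
  nlinarith

theorem multichoose_le {Δ n m K : ℕ} (hΔ : 0 < Δ) (hm0 : 0 < m) (hm : Δ * n = 2 * m) (hK : Δ ≤ K) :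
    ((n * K).multichoose m : ℝ) ≤ (9 * K / Δ) ^ m := by
  have hΔ' : (0 : ℝ) < Δ := by exact_mod_cast hΔ
  have hm' : (Δ : ℝ) * n = 2 * m := by exact_mod_cast hm
  have hmp : (0 : ℝ) < m := by exact_mod_cast hm0
  have hK' : (Δ : ℝ) ≤ K := by exact_mod_cast hK
  have h3 : (0 : ℝ) < m.factorial := by exact_mod_cast m.factorial_pos
  have h1 : ((n * K).multichoose m : ℝ) ≤ ((n * K + m : ℕ) : ℝ) ^ m / m.factorial := by
    rw [Nat.multichoose_eq]
    refine (Nat.choose_le_pow_div (α := ℝ) m (n * K + m - 1)).trans ?_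
    gcongr
    omega
  have h2 : ((n * K + m : ℕ) : ℝ) ≤ (9 * K / Δ) * (m / 3) := by
    have : (9 * K / Δ) * (m / 3) - ((n * K + m : ℕ) : ℝ) = (K - Δ) * m / Δ := by
      have hn : (n : ℝ) = 2 * m / Δ := by field_simp; linarith
      push_cast
      rw [hn]
      field_simp
      ring
    have h4 : 0 ≤ (K - Δ) * (m : ℝ) / Δ := by
      have := sub_nonneg.mpr hK'
      positivity
    linarith
  refine h1.trans ?_
  rw [div_le_iff₀ h3]
  calc ((n * K + m : ℕ) : ℝ) ^ m ≤ ((9 * K / Δ) * (m / 3)) ^ m := by gcongr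
    _ = (9 * K / Δ) ^ m * (m / 3 : ℝ) ^ m := by rw [mul_pow]
    _ ≤ _ := by gcongr; exact div_three_pow_le_factorial m

/-- An upper bound for the number of encodings of graphs with `K`-queue layouts. The
exponent `1/2 - 1/Δ` is the one for which the factor `n! ≤ n ^ n` for the vertex orderings cancels. -/
theorem layouts_le {Δ n m K : ℕ} (hΔ : 0 < Δ) (hn0 : 0 < n) (hm0 : 0 < m) (hm : Δ * n = 2 * m)
    (hK : Δ ≤ K)
    (hKle : (K : ℝ) ≤ 1 / 50 * Real.sqrt Δ * (n : ℝ) ^ ((1 : ℝ) / 2 - 1 / (Δ : ℝ))) :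
    ((n.factorial * ((n * K).multichoose m * (n * K).multichoose m) : ℕ) : ℝ) ≤
      (81 / 2500 * (n / Δ)) ^ m := by
  have hΔ' : (0 : ℝ) < Δ := by exact_mod_cast hΔ
  have hn' : (0 : ℝ) < n := by exact_mod_cast hn0
  have hm' : (Δ : ℝ) * n = 2 * m := by exact_mod_cast hm
  set x : ℝ := (n : ℝ) ^ ((1 : ℝ) / 2 - 1 / (Δ : ℝ)) with hx
  have hx0 : 0 ≤ x := by positivity
  have hxp : (n : ℝ) ^ n * (x ^ 2) ^ m = (n : ℝ) ^ m := by
    rw [hx, ← pow_mul, ← Real.rpow_mul_natCast hn'.le, ← Real.rpow_natCast, ← Real.rpow_add hn',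
      ← Real.rpow_natCast]
    congr 1
    push_cast
    rw [← hm']
    have : (m : ℝ) = Δ * n / 2 := by linarith
    rw [this]
    field_simp
    ring
  have h1 := multichoose_le hΔ hm0 hm hK
  have h2 : (n.factorial : ℝ) ≤ (n : ℝ) ^ n := by exact_mod_cast Nat.factorial_le_pow n
  have h3 : (9 * K / Δ : ℝ) ^ 2 ≤ 81 / 2500 * (1 / Δ) * x ^ 2 := by
    calc (9 * K / Δ : ℝ) ^ 2 ≤ (9 * (1 / 50 * Real.sqrt Δ * x) / Δ) ^ 2 := by gcongr
      _ = 81 / 2500 * (Real.sqrt Δ ^ 2 / Δ ^ 2) * x ^ 2 := by ring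
      _ = _ := by rw [Real.sq_sqrt hΔ'.le]; field_simp
  push_cast
  calc (n.factorial : ℝ) * ((n * K).multichoose m * (n * K).multichoose m)
      ≤ (n : ℝ) ^ n * ((9 * K / Δ) ^ m * (9 * K / Δ) ^ m) := by gcongr
    _ = (n : ℝ) ^ n * ((9 * K / Δ) ^ 2) ^ m := by rw [← mul_pow, sq]
    _ ≤ (n : ℝ) ^ n * (81 / 2500 * (1 / Δ) * x ^ 2) ^ m := by gcongr
    _ = (81 / 2500 * (1 / Δ)) ^ m * ((n : ℝ) ^ n * (x ^ 2) ^ m) := by rw [mul_pow]; ring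
    _ = _ := by rw [hxp, ← mul_pow]; congr 1; ring

/-- The family of lifts has `(s!) ^ (Δ * Δ)` members, which is at least
`(n / (12 Δ)) ^ m / n ^ (2 Δ ^ 2)`; the denominator accounts for the `r ≤ 4 Δ` remaining vertices. -/
theorem lt_family {Δ n m s r : ℕ} (hΔ : 2 ≤ Δ) (hm : Δ * n = 2 * m)
    (hn : 2 * (Δ * s) + r = n) (hr : r ≤ 4 * Δ) (hn8 : 8 * Δ ≤ n)
    (hbig : (n : ℝ) ^ (2 * Δ ^ 2) < 2 ^ n) :
    (81 / 2500 * (n / Δ) : ℝ) ^ m < ((s.factorial ^ (Δ * Δ) : ℕ) : ℝ) := by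
  have hΔ' : (0 : ℝ) < Δ := by exact_mod_cast (by omega : 0 < Δ)
  have hn1 : (1 : ℝ) ≤ n := by exact_mod_cast (by omega : 1 ≤ n)
  have hn' : (0 : ℝ) < n := by linarith
  have hΔ1 : (1 : ℝ) ≤ Δ := by exact_mod_cast (by omega : 1 ≤ Δ)
  have hmn : n ≤ m := by nlinarith
  -- `w = Δ * r / 2` is the number of edges outside the lift.
  obtain ⟨w, hw⟩ : ∃ w, m = s * (Δ * Δ) + w := Nat.exists_eq_add_of_le (by nlinarith)
  have hw2 : w ≤ 2 * Δ ^ 2 := by nlinarith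
  set y : ℝ := n / (12 * Δ) with hy
  have hy0 : 0 < y := by positivity
  have hyn : y ≤ n := by
    rw [hy]; apply div_le_self hn'.le; linarith
  have hs : y ≤ s / 3 := by
    have h1 : (n : ℝ) ≤ 4 * (Δ * s) := by exact_mod_cast (by omega : n ≤ 4 * (Δ * s))
    rw [hy, div_le_div_iff₀ (by positivity) (by norm_num)]
    linarith
  have h1 : y ^ (s * (Δ * Δ)) ≤ ((s.factorial ^ (Δ * Δ) : ℕ) : ℝ) := by
    push_cast
    rw [pow_mul]
    gcongr
    exact (pow_le_pow_left₀ hy0.le hs s).trans (div_three_pow_le_factorial s)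
  have h2 : y ^ m ≤ y ^ (s * (Δ * Δ)) * (n : ℝ) ^ (2 * Δ ^ 2) := by
    rw [hw, pow_add]
    gcongr
    exact (pow_le_pow_left₀ hy0.le hyn w).trans (pow_le_pow_right₀ hn1 hw2)
  have h3 : (81 / 2500 * (n / Δ) : ℝ) ^ m * 2 ^ m ≤ y ^ m := by
    rw [← mul_pow]
    have : (81 / 2500 * (n / Δ) : ℝ) * 2 = 1944 / 2500 * y := by
      rw [hy]; field_simp; norm_num
    rw [this]
    gcongr
    linarith
  have h4 : (n : ℝ) ^ (2 * Δ ^ 2) < 2 ^ m := hbig.trans_le (pow_le_pow_right₀ (by norm_num) hmn)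
  have h5 : (0 : ℝ) < y ^ (s * (Δ * Δ)) := by positivity
  refine lt_of_lt_of_le ?_ h1
  have h6 : (0 : ℝ) < 2 ^ m := by positivity
  nlinarith [mul_lt_mul_of_pos_left h4 h5]

theorem eventually_large (Δ : ℕ) (hΔ : 3 ≤ Δ) : ∃ N : ℕ, ∀ n : ℕ, N ≤ n →
    (n : ℝ) ^ (2 * Δ ^ 2) < 2 ^ n ∧
    (Δ : ℝ) ≤ 1 / 50 * Real.sqrt Δ * (n : ℝ) ^ ((1 : ℝ) / 2 - 1 / (Δ : ℝ)) := by
  have hΔ' : (3 : ℝ) ≤ Δ := by exact_mod_cast hΔ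
  have h1 : ∀ᶠ n : ℕ in Filter.atTop, (n : ℝ) ^ (2 * Δ ^ 2) / 2 ^ n < 1 :=
    (tendsto_pow_const_div_const_pow_of_one_lt (2 * Δ ^ 2) (one_lt_two)).eventually_lt_const
      one_pos
  have hα : 0 < (1 : ℝ) / 2 - 1 / (Δ : ℝ) := by
    have : (1 : ℝ) / Δ ≤ 1 / 3 := by gcongr
    linarith
  have h2 := ((tendsto_rpow_atTop hα).comp tendsto_natCast_atTop_atTop).const_mul_atTop
    (by positivity : 0 < 1 / 50 * Real.sqrt Δ) |>.eventually_ge_atTop (Δ : ℝ)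
  obtain ⟨N, hN⟩ := Filter.eventually_atTop.mp (h1.and h2)
  refine ⟨N, fun n hn => ⟨?_, (hN n hn).2⟩⟩
  have := (hN n hn).1
  rwa [div_lt_one (by positivity)] at this

end Auxiliary

/-- There is an absolute constant `c > 0` such that for every `Δ ≥ 3` and all
sufficiently large `n` with `Δ * n` even, there is a simple `Δ`-regular graph
on `n` vertices whose queue-number is at least `c * √Δ * n ^ (1/2 - 1/Δ)`. -/
theorem exists_regular_graph_large_queueNumber :
    ∃ c : ℝ, 0 < c ∧ ∀ Δ : ℕ, 3 ≤ Δ →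
      ∃ N : ℕ, ∀ n : ℕ, N ≤ n → Even (Δ * n) →
        ∃ G : SimpleGraph (Fin n),
          (∀ v, (G.neighborSet v).ncard = Δ) ∧
          ∀ k : ℕ, HasKQueueLayout n G k →
            c * Real.sqrt Δ * (n : ℝ) ^ ((1 : ℝ) / 2 - 1 / (Δ : ℝ)) ≤ (k : ℝ) := by
  refine ⟨1 / 50, by norm_num, fun Δ hΔ => ?_⟩
  obtain ⟨N, hN⟩ := eventually_large Δ hΔ
  refine ⟨max N (8 * Δ), fun n hn he => ?_⟩
  obtain ⟨hbig, hlarge⟩ := hN n ((le_max_left _ _).trans hn)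
  have hn8 : 8 * Δ ≤ n := (le_max_right _ _).trans hn
  obtain ⟨s, r, hsr, hr1, hr2⟩ :
      ∃ s r, 2 * (Δ * s) + r = n ∧ 2 * Δ + 1 ≤ r ∧ r ≤ 4 * Δ := by
    have h1 := Nat.div_add_mod (n - (2 * Δ + 1)) (2 * Δ)
    have h2 := Nat.mod_lt (n - (2 * Δ + 1)) (by omega : 0 < 2 * Δ)
    refine ⟨(n - (2 * Δ + 1)) / (2 * Δ), (n - (2 * Δ + 1)) % (2 * Δ) + (2 * Δ + 1), ?_, ?_, ?_⟩
    · rw [← mul_assoc]; omega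
    · omega
    · omega
  obtain ⟨F, hFinj, hFreg⟩ := exists_family Δ s r n hsr hr1 he
  obtain ⟨m, hm⟩ := he
  rw [← two_mul] at hm
  have hm0 : 0 < m := by nlinarith
  by_contra! hcon
  set B : ℝ := 1 / 50 * Real.sqrt Δ * (n : ℝ) ^ ((1 : ℝ) / 2 - 1 / (Δ : ℝ)) with hB
  have hlay : ∀ π, HasKQueueLayout n (F π) ⌊B⌋₊ := by
    intro π
    obtain ⟨k, hk, hkB⟩ := hcon (F π) (hFreg π)
    exact hk.mono (Nat.le_floor hkB.le)
  have hcount := card_le_of_hasKQueueLayout F hFinj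
    (fun π => card_edgeFinset_of_regular (F π) hm (hFreg π)) hlay
  have hup := layouts_le (by omega) (by omega) hm0 hm (Nat.le_floor hlarge)
    (Nat.floor_le ((Nat.cast_nonneg Δ).trans hlarge))
  have hlow := lt_family (by omega) hm hsr hr2 hn8 hbig
  have hcard : Fintype.card (Fin Δ × Fin Δ → Equiv.Perm (Fin s)) = s.factorial ^ (Δ * Δ) := by
    simp [Fintype.card_perm]
  rw [hcard] at hcount
  have hcount' : ((s.factorial ^ (Δ * Δ) : ℕ) : ℝ) ≤ _ := Nat.cast_le.mpr hcount
  exact absurd (hcount'.trans hup) (not_le.mpr hlow)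
end

section
/- For every integer Δ ≥ 1 there exists N(Δ) such that for all n ≥ N(Δ) with Δ·n even, the number of labelled simple Δ-regular graphs on the vertex set {1,…,n} is at least (n/(3Δ))^(Δn/2). -/
/-!
For an even number `n = 2m` of vertices, regular graphs are built one perfect matching at a time.

* Let `H` have maximum degree at most `d`. Its complement has at least `2 ^ k * k!` perfect
  matchings when `m = 2d + 2 + k` (`le_card_matchings_compl`): a vertex can be matched greedily in
  many ways until only `4d + 4` vertices are left, and a Dirac-type augmentation
  (`exists_partial_matching`) shows that the rest can always be matched.
* A `(d+1)`-regular graph has at most `(d+1) ^ m` perfect matchings (`card_matchings_le`).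
* Double counting pairs of a `(d+1)`-regular graph and a perfect matching in it
  (`card_regularGraphs_succ`) and iterating gives, for the number `R` of `Δ`-regular graphs,
  `(2 ^ k * k!) ^ Δ ≤ Δ ^ (mΔ) * R` (`pow_le_card_regularGraphs`).

For odd `n` the degree `Δ = 2t` is even. Removing `t` independent edges of a `Δ`-regular graph on
`n - 1` vertices and joining their `2t` endpoints to a new vertex gives a `Δ`-regular graph on `n`
vertices; each graph arises at most `Δ ^ t` times, since the removed edges form a perfect matching
of the neighbourhood of the new vertex (`card_regularGraphs_le_option`).

By Stirling's formula `2 ^ k * k!` is `(2m / e) ^ m` up to a factor polynomial in `m`, and the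
gap between `e` and `3` absorbs all such factors (`exists_pow_le_factorial`).
-/

open Finset

/-! ### Perfect matchings as involutions -/

open Classical in
/-- The perfect matchings of `G[U]`, encoded as the involutions of `V` that fix every vertex outside
`U` and send every vertex of `U` to a neighbour (which then lies in `U`). -/
noncomputable def matchings {V : Type} [Fintype V] (G : SimpleGraph V) (U : Finset V) :
    Finset (Equiv.Perm V) :=
  {σ | (∀ x, σ (σ x) = x) ∧ (∀ x ∈ U, G.Adj x (σ x)) ∧ ∀ x ∉ U, σ x = x}

section Matchings
open Classical
variable {V : Type} [Fintype V]

lemma mem_matchings {G : SimpleGraph V} {U : Finset V} {σ : Equiv.Perm V} :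
    σ ∈ matchings G U ↔
      (∀ x, σ (σ x) = x) ∧ (∀ x ∈ U, G.Adj x (σ x)) ∧ ∀ x ∉ U, σ x = x := by
  simp [matchings]

lemma matchings_apply_mem {G : SimpleGraph V} {U : Finset V} {σ : Equiv.Perm V}
    (h : σ ∈ matchings G U) {x : V} (hx : x ∈ U) : σ x ∈ U := by
  rw [mem_matchings] at h
  by_contra hc
  have h1 := h.2.2 _ hc
  rw [h.1] at h1
  exact (h.2.1 x hx).ne h1

lemma swap_mul_mem_insert {G : SimpleGraph V} {U : Finset V} {σ : Equiv.Perm V}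
    (h : σ ∈ matchings G U) {u v : V} (huv : G.Adj u v) (hu : u ∉ U) (hv : v ∉ U) :
    Equiv.swap u v * σ ∈ matchings G (insert u (insert v U)) := by
  have hmem := fun x (hx : x ∈ U) => matchings_apply_mem h hx
  rw [mem_matchings] at h ⊢
  obtain ⟨h1, h2, h3⟩ := h
  have hne := huv.ne
  have hs := huv.symm
  have h4 := h3 u hu
  have h5 := h3 v hv
  refine ⟨fun x => ?_, fun x hx => ?_, fun x hx => ?_⟩ <;>
    simp only [Equiv.Perm.mul_apply, Equiv.swap_apply_def, mem_insert, not_or] at * <;> grind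

lemma swap_mul_mem_erase {G : SimpleGraph V} {U : Finset V} {σ : Equiv.Perm V}
    (h : σ ∈ matchings G U) {u : V} (hu : u ∈ U) :
    Equiv.swap u (σ u) * σ ∈ matchings G ((U.erase u).erase (σ u)) := by
  rw [mem_matchings] at h ⊢
  obtain ⟨h1, h2, h3⟩ := h
  have hne := (h2 u hu).ne
  refine ⟨fun x => ?_, fun x hx => ?_, fun x hx => ?_⟩ <;>
    simp only [Equiv.Perm.mul_apply, Equiv.swap_apply_def, mem_erase] at * <;> grind

/-- Perfect matchings of `U` are classified by the partner `v` of a fixed vertex `u`. -/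
lemma card_matchings_eq_sum (G : SimpleGraph V) (U : Finset V) {u : V} (hu : u ∈ U) :
    #(matchings G U) =
      ∑ v ∈ U.filter (G.Adj u), #(matchings G ((U.erase u).erase v)) := by
  rw [card_eq_sum_card_fiberwise (f := fun σ => σ u) (t := U.filter (G.Adj u))]
  · refine sum_congr rfl fun v hv => ?_
    rw [mem_filter] at hv
    refine card_nbij' (fun σ => Equiv.swap u v * σ) (fun σ => Equiv.swap u v * σ) ?_ ?_ ?_ ?_
    · intro σ hσ
      rw [mem_coe, mem_filter] at hσ
      obtain ⟨hσ, rfl⟩ := hσ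
      exact swap_mul_mem_erase hσ hu
    · intro σ hσ
      have hσ : σ ∈ matchings G ((U.erase u).erase v) := hσ
      have h := swap_mul_mem_insert hσ hv.2 (by simp) (by simp)
      have e : insert u (insert v ((U.erase u).erase v)) = U := by
        rw [insert_erase (by simp [hv.1, hv.2.ne.symm]), insert_erase hu]
      rw [e] at h
      have h3 := (mem_matchings.1 hσ).2.2 u (by simp)
      simp [h, h3]
    · intro σ _
      simp [← mul_assoc]
    · intro σ _
      simp [← mul_assoc]
  · intro σ hσ
    have hσ : σ ∈ matchings G U := hσ
    simp [matchings_apply_mem hσ hu, (mem_matchings.1 hσ).2.1 u hu]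

lemma card_erase_erase {V : Type} {U : Finset V} {u v : V} {m : ℕ} (hU : #U = m + 2) (hu : u ∈ U)
    (hv : v ∈ U) (huv : u ≠ v) : #((U.erase u).erase v) = m := by
  rw [card_erase_of_mem (by simp [hv, huv.symm]), card_erase_of_mem hu]; omega

lemma card_matchings_le (G : SimpleGraph V) (D m : ℕ) (U : Finset V) (hU : #U = 2 * m)
    (hD : ∀ u ∈ U, #(U.filter (G.Adj u)) ≤ D) : #(matchings G U) ≤ D ^ m := by
  induction m generalizing U with
  | zero =>
    simp only [mul_zero, card_eq_zero] at hU
    subst hU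
    have : matchings G ∅ ⊆ {1} := by
      intro σ hσ
      rw [mem_matchings] at hσ
      simp only [mem_singleton]
      ext x
      simpa using hσ.2.2 x (by simp)
    simpa using card_le_card this
  | succ m ih =>
    obtain ⟨u, hu⟩ : U.Nonempty := by rw [← card_pos]; omega
    rw [card_matchings_eq_sum G U hu]
    calc _ ≤ ∑ v ∈ U.filter (G.Adj u), D ^ m := by
          refine sum_le_sum fun v hv => ?_
          rw [mem_filter] at hv
          refine ih _ (card_erase_erase (by omega) hu hv.1 hv.2.ne) fun w hw => ?_
          simp only [mem_erase] at hw
          refine le_trans (card_le_card ?_) (hD w hw.2.2)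
          exact filter_subset_filter _ ((erase_subset _ _).trans (erase_subset _ _))
      _ ≤ D ^ (m + 1) := by
          rw [sum_const, smul_eq_mul, pow_succ']
          exact Nat.mul_le_mul_right _ (hD u hu)

lemma card_compl_neighbors (H : SimpleGraph V) (d : ℕ) (hd : ∀ x, #{y | H.Adj x y} ≤ d)
    (U : Finset V) (u : V) : #U ≤ #(U.filter (Hᶜ.Adj u)) + d + 1 := by
  have : U ⊆ U.filter (Hᶜ.Adj u) ∪ (({y | H.Adj u y} : Finset V) ∪ {u}) := by
    intro x hx
    simp only [mem_union, mem_filter, mem_univ, true_and, mem_singleton, SimpleGraph.compl_adj]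
    grind
  have h1 := card_le_card this
  have h2 := card_union_le (U.filter (Hᶜ.Adj u)) (({y | H.Adj u y} : Finset V) ∪ {u})
  have h3 := card_union_le ({y | H.Adj u y} : Finset V) {u}
  have := hd u
  simp only [card_singleton] at h3
  omega

/-- In the complement of a graph of maximum degree at most `d`, every set `U` of at least `4d + 4`
vertices has matchings of all sizes up to `|U| / 2`. -/
lemma exists_partial_matching (H : SimpleGraph V) (d : ℕ) (hd : ∀ x, #{y | H.Adj x y} ≤ d)
    (U : Finset V) (hU : 4 * d + 4 ≤ #U) (k : ℕ) (hk : 2 * k ≤ #U) :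
    ∃ W ⊆ U, #W = 2 * k ∧ (matchings Hᶜ W).Nonempty := by
  induction k with
  | zero => exact ⟨∅, by simp, by simp, 1, by simp [mem_matchings]⟩
  | succ k ih =>
    obtain ⟨W, hWU, hW, f, hf⟩ := ih (by omega)
    have hc : #(U \ W) = #U - 2 * k := by rw [card_sdiff_of_subset hWU, hW]
    by_cases hadj : ∃ u ∈ U \ W, ∃ v ∈ U \ W, Hᶜ.Adj u v
    · obtain ⟨u, hu, v, hv, huv⟩ := hadj
      rw [mem_sdiff] at hu hv
      refine ⟨insert u (insert v W), ?_, ?_, _, swap_mul_mem_insert hf huv hu.2 hv.2⟩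
      · simp [insert_subset_iff, hu.1, hv.1, hWU]
      · rw [card_insert_of_notMem (by simp [hu.2, huv.ne]), card_insert_of_notMem hv.2]; omega
    · -- All of `U \ W` is a clique of `H`, hence small, so `W` is large: some edge `x, f x` of the
      -- matching can be replaced by the two edges `u, x` and `v, f x`.
      push Not at hadj
      obtain ⟨u, hu, v, hv, huv⟩ := one_lt_card.1 (show 1 < #(U \ W) by omega)
      have hlarge : 2 * d < #W := by
        have h1 := card_compl_neighbors H d hd (U \ W) u
        rw [filter_false_of_mem (hadj u hu)] at h1
        simp at h1
        omega
      obtain ⟨x, hx, hx1, hx2⟩ : ∃ x ∈ W, ¬ H.Adj u x ∧ ¬ H.Adj v (f x) := by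
        by_contra! hcon
        have : W ⊆ ({y | H.Adj u y} : Finset V) ∪ image f {y | H.Adj v y} := by
          intro x hx
          simp only [mem_union, mem_filter, mem_univ, true_and, mem_image]
          by_cases h : H.Adj u x
          · exact Or.inl h
          · exact Or.inr ⟨f x, hcon x hx h, (mem_matchings.1 hf).1 x⟩
        have h1 := card_le_card this
        have h2 := card_union_le ({y | H.Adj u y} : Finset V) (image f {y | H.Adj v y})
        have h3 : #(image f {y | H.Adj v y}) ≤ _ := card_image_le
        have := hd u
        have := hd v
        omega
      rw [mem_sdiff] at hu hv
      have hfx := matchings_apply_mem hf hx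
      have hne : x ≠ f x := ((mem_matchings.1 hf).2.1 x hx).ne
      have e1 := swap_mul_mem_erase hf hx
      have hux : Hᶜ.Adj u x := by
        rw [SimpleGraph.compl_adj]; exact ⟨fun h => hu.2 (h ▸ hx), hx1⟩
      have hvx : Hᶜ.Adj v (f x) := by
        rw [SimpleGraph.compl_adj]; exact ⟨fun h => hv.2 (h ▸ hfx), hx2⟩
      have e2 := swap_mul_mem_insert e1 hux (by simp [hu.2]) (by simp)
      have e3 := swap_mul_mem_insert e2 hvx (by grind) (by grind)
      refine ⟨_, ?_, ?_, _, e3⟩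
      · intro z hz
        simp only [mem_insert, mem_erase] at hz
        grind
      · have : insert v (insert (f x) (insert u (insert x ((W.erase x).erase (f x)))))
            = insert v (insert u W) := by
          ext z; simp only [mem_insert, mem_erase]; grind
        rw [this, card_insert_of_notMem (by simp [hv.2, huv.symm]),
          card_insert_of_notMem hu.2]
        omega

lemma le_card_matchings_compl (H : SimpleGraph V) (d : ℕ) (hd : ∀ x, #{y | H.Adj x y} ≤ d)
    (k : ℕ) (U : Finset V) (hU : #U = 2 * (2 * d + 2 + k)) :
    2 ^ k * k.factorial ≤ #(matchings Hᶜ U) := by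
  induction k generalizing U with
  | zero =>
    obtain ⟨W, hWU, hW, hne⟩ :=
      exists_partial_matching H d hd U (by omega) (2 * d + 2 + 0) (by omega)
    rw [eq_of_subset_of_card_le hWU (by omega)] at hne
    simpa using hne.card_pos
  | succ k ih =>
    obtain ⟨u, hu⟩ : U.Nonempty := by rw [← card_pos]; omega
    rw [card_matchings_eq_sum _ U hu]
    have h1 := card_compl_neighbors H d hd U u
    calc 2 ^ (k + 1) * (k + 1).factorial = (2 * (k + 1)) * (2 ^ k * k.factorial) := by
          rw [Nat.factorial_succ]; ring
      _ ≤ #(U.filter (Hᶜ.Adj u)) * (2 ^ k * k.factorial) := by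
          apply Nat.mul_le_mul_right; omega
      _ = ∑ v ∈ U.filter (Hᶜ.Adj u), 2 ^ k * k.factorial := by simp
      _ ≤ ∑ v ∈ U.filter (Hᶜ.Adj u), #(matchings Hᶜ ((U.erase u).erase v)) := by
          refine sum_le_sum fun v hv => ?_
          rw [mem_filter] at hv
          exact ih _ (card_erase_erase (by omega) hu hv.1 hv.2.ne)
      _ = _ := by congr!

end Matchings

open Classical in
/-- The `d`-regular graphs on `V`. -/
noncomputable def regularGraphs (V : Type) [Fintype V] (d : ℕ) : Finset (SimpleGraph V) :=
  {G | ∀ x, #{y | G.Adj x y} = d}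

/-- `G` together with the edges joining `x` to `σ x`, for all `x` not fixed by `σ`. -/
def addMatching {V : Type} (G : SimpleGraph V) (σ : Equiv.Perm V) : SimpleGraph V where
  Adj x y := G.Adj x y ∨ (x ≠ y ∧ (σ x = y ∨ σ y = x))
  symm := ⟨by intro x y h; have := G.adj_comm x y; grind⟩
  loopless := ⟨by intro x h; simp at h⟩

/-- The graph obtained from `G` by deleting the edges joining `x` to `σ x` and adding a new vertex
`none`, joined to all vertices moved by `σ`. -/
def addApex {V : Type} (G : SimpleGraph V) (σ : Equiv.Perm V) : SimpleGraph (Option V) where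
  Adj
    | some x, some y => G.Adj x y ∧ σ x ≠ y ∧ σ y ≠ x
    | some x, none => σ x ≠ x
    | none, some x => σ x ≠ x
    | none, none => False
  symm := ⟨by rintro (_ | x) (_ | y) h <;> simp_all [G.adj_comm]⟩
  loopless := ⟨by rintro (_ | x) h <;> simp_all⟩

section Apex
variable {V : Type} (G : SimpleGraph V) (σ : Equiv.Perm V) (x y : V)

@[simp] lemma addApex_some_some : (addApex G σ).Adj (some x) (some y) ↔
    G.Adj x y ∧ σ x ≠ y ∧ σ y ≠ x := Iff.rfl

@[simp] lemma addApex_some_none : (addApex G σ).Adj (some x) none ↔ σ x ≠ x := Iff.rfl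

@[simp] lemma addApex_none_some : (addApex G σ).Adj none (some x) ↔ σ x ≠ x := Iff.rfl

end Apex

/-! ### Building regular graphs from matchings -/

section Regular
open Classical
variable {V : Type} [Fintype V]

lemma mem_regularGraphs {G : SimpleGraph V} {d : ℕ} :
    G ∈ regularGraphs V d ↔ ∀ x, #{y | G.Adj x y} = d := by
  simp [regularGraphs]

lemma addMatching_adj {G : SimpleGraph V} {σ : Equiv.Perm V} (h : σ ∈ matchings Gᶜ univ)
    (x y : V) : (addMatching G σ).Adj x y ↔ G.Adj x y ∨ σ x = y := by
  rw [mem_matchings] at h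
  have h1 := h.1 x
  have h2 := h.1 y
  have h3 := (h.2.1 x (mem_univ _)).ne
  simp only [addMatching]
  grind

lemma addMatching_mem {G : SimpleGraph V} {σ : Equiv.Perm V} {d : ℕ}
    (hG : G ∈ regularGraphs V d) (h : σ ∈ matchings Gᶜ univ) :
    addMatching G σ ∈ regularGraphs V (d + 1) := by
  rw [mem_regularGraphs] at hG ⊢
  intro x
  have e : ({y | (addMatching G σ).Adj x y} : Finset V) = insert (σ x) ({y | G.Adj x y} : Finset V) := by
    ext y
    simp only [mem_filter, mem_univ, true_and, mem_insert, addMatching_adj h]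
    grind
  have h2 := (mem_matchings.1 h).2.1 x (mem_univ _)
  rw [SimpleGraph.compl_adj] at h2
  rw [e, card_insert_of_notMem (by simp [h2.2]), hG]

/-- Double counting of the pairs of a `(d+1)`-regular graph and a perfect matching in it whose
removal leaves a `d`-regular graph. -/
lemma card_regularGraphs_succ (d m L : ℕ) (hV : Fintype.card V = 2 * m)
    (hL : ∀ G ∈ regularGraphs V d, L ≤ #(matchings Gᶜ univ)) :
    #(regularGraphs V d) * L ≤ (d + 1) ^ m * #(regularGraphs V (d + 1)) := by
  calc #(regularGraphs V d) * L = ∑ G ∈ regularGraphs V d, L := by simp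
    _ ≤ ∑ G ∈ regularGraphs V d, #(matchings Gᶜ univ) := sum_le_sum hL
    _ = #((regularGraphs V d).sigma fun G => matchings Gᶜ univ) := by rw [card_sigma]
    _ ≤ _ := by
      refine card_le_mul_card_image_of_maps_to (f := fun p => addMatching p.1 p.2) ?_ _ ?_
      · rintro ⟨G, σ⟩ h
        rw [mem_sigma] at h
        exact addMatching_mem h.1 h.2
      · intro K hK
        refine le_trans ?_ (card_matchings_le K (d + 1) m univ (by simpa using hV) ?_)
        · refine card_le_card_of_injOn (fun p => p.2) ?_ ?_
          · rintro ⟨G, σ⟩ h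
            rw [mem_coe, mem_filter, mem_sigma] at h
            obtain ⟨⟨hG, hσ⟩, rfl⟩ := h
            dsimp only at hG hσ ⊢
            have h' := mem_matchings.1 hσ
            rw [mem_coe, mem_matchings]
            refine ⟨h'.1, fun x _ => ?_, fun x hx => absurd (mem_univ x) hx⟩
            rw [addMatching_adj hσ]
            exact Or.inr rfl
          · rintro ⟨G, σ⟩ h ⟨G', σ'⟩ h' (rfl : σ = σ')
            rw [mem_coe, mem_filter, mem_sigma] at h h'
            obtain ⟨⟨hG, hσ⟩, h⟩ := h
            obtain ⟨⟨hG', hσ'⟩, h'⟩ := h'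
            dsimp only at hG hσ h hG' hσ' h'
            have : G = G' := by
              ext x y
              have e : (addMatching G σ).Adj x y ↔ (addMatching G' σ).Adj x y := by rw [h, h']
              rw [addMatching_adj hσ, addMatching_adj hσ'] at e
              have h1 := (mem_matchings.1 hσ).2.1 x (mem_univ _)
              have h2 := (mem_matchings.1 hσ').2.1 x (mem_univ _)
              rw [SimpleGraph.compl_adj] at h1 h2
              grind
            rw [this]
        · intro u _
          exact (mem_regularGraphs.1 hK u).le

lemma pow_le_card_regularGraphs (D k : ℕ) (hV : Fintype.card V = 2 * (2 * D + 2 + k))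
    (d : ℕ) (hd : d ≤ D) :
    (2 ^ k * k.factorial) ^ d ≤ (D ^ (2 * D + 2 + k)) ^ d * #(regularGraphs V d) := by
  induction d with
  | zero =>
    have : (⊥ : SimpleGraph V) ∈ regularGraphs V 0 := by simp [mem_regularGraphs]
    simpa using card_pos.2 ⟨_, this⟩
  | succ d ih =>
    have h1 := card_regularGraphs_succ (V := V) d _ (2 ^ k * k.factorial) hV (by
      intro G hG
      refine le_card_matchings_compl G D (fun x => ?_) k univ (by simpa using hV)
      rw [mem_regularGraphs.1 hG x]; omega)
    have h2 : (d + 1) ^ (2 * D + 2 + k) ≤ D ^ (2 * D + 2 + k) := Nat.pow_le_pow_left hd _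
    calc (2 ^ k * k.factorial) ^ (d + 1)
        = (2 ^ k * k.factorial) ^ d * (2 ^ k * k.factorial) := pow_succ _ _
      _ ≤ (D ^ (2 * D + 2 + k)) ^ d * #(regularGraphs V d) * (2 ^ k * k.factorial) :=
          Nat.mul_le_mul_right _ (ih (by omega))
      _ = (D ^ (2 * D + 2 + k)) ^ d * (#(regularGraphs V d) * (2 ^ k * k.factorial)) := by ring
      _ ≤ (D ^ (2 * D + 2 + k)) ^ d *
            (D ^ (2 * D + 2 + k) * #(regularGraphs V (d + 1))) := by
          exact Nat.mul_le_mul_left _ (h1.trans (Nat.mul_le_mul_right _ h2))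
      _ = _ := by ring

/-- A vertex `u` outside the `2k < 2t` matched vertices has a neighbour outside them. -/
lemma exists_matching_of_regular {G : SimpleGraph V} {t : ℕ} (hG : G ∈ regularGraphs V (2 * t))
    (hV : 2 * t ≤ Fintype.card V) (k : ℕ) (hk : k ≤ t) :
    ∃ W : Finset V, #W = 2 * k ∧ (matchings G W).Nonempty := by
  induction k with
  | zero => exact ⟨∅, by simp, 1, by simp [mem_matchings]⟩
  | succ k ih =>
    obtain ⟨W, hW, f, hf⟩ := ih (by omega)
    obtain ⟨u, -, hu⟩ := exists_mem_notMem_of_card_lt_card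
      (show #W < #(univ : Finset V) by rw [card_univ]; omega)
    obtain ⟨v, hv, hvW⟩ := exists_mem_notMem_of_card_lt_card
      (show #W < #({y | G.Adj u y} : Finset V) by rw [mem_regularGraphs.1 hG u]; omega)
    have huv : G.Adj u v := by simpa using hv
    refine ⟨_, ?_, _, swap_mul_mem_insert hf huv hu hvW⟩
    rw [card_insert_of_notMem (by simp [hu, huv.ne]), card_insert_of_notMem hvW]; omega

lemma matchings_support {G : SimpleGraph V} {W : Finset V} {σ : Equiv.Perm V}
    (h : σ ∈ matchings G W) (x : V) : σ x ≠ x ↔ x ∈ W := by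
  rw [mem_matchings] at h
  refine ⟨fun hx => by_contra fun hc => hx (h.2.2 x hc), fun hx => (h.2.1 x hx).ne'⟩

lemma addApex_mem {G : SimpleGraph V} {W : Finset V} {σ : Equiv.Perm V} {d : ℕ}
    (hG : G ∈ regularGraphs V d) (h : σ ∈ matchings G W) (hW : #W = d) :
    addApex G σ ∈ regularGraphs (Option V) d := by
  have hs := matchings_support h
  obtain ⟨h1, h2, h3⟩ := mem_matchings.1 h
  rw [mem_regularGraphs] at hG ⊢
  rintro (_ | x)
  · have e : ({y | (addApex G σ).Adj none y} : Finset (Option V)) = W.map .some := by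
      ext (_ | y) <;> simp [← hs]
    rw [e, card_map, hW]
  · by_cases hx : x ∈ W
    · have e : ({y | (addApex G σ).Adj (some x) y} : Finset (Option V)) =
          insert none ((({y | G.Adj x y} : Finset V).erase (σ x)).map .some) := by
        ext (_ | y)
        · simpa [hx] using hs x
        · have := h1 x
          have := h1 y
          simp
          grind
      have hm : σ x ∈ ({y | G.Adj x y} : Finset V) := by simpa using h2 x hx
      rw [e, card_insert_of_notMem (by simp), card_map, card_erase_of_mem hm, hG]
      have : 0 < #({y | G.Adj x y} : Finset V) := card_pos.2 ⟨_, hm⟩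
      rw [hG] at this
      omega
    · have e : ({y | (addApex G σ).Adj (some x) y} : Finset (Option V)) =
          ({y | G.Adj x y} : Finset V).map .some := by
        ext (_ | y)
        · simpa [hx] using hs x
        · have := h1 y
          have := h3 x hx
          have : G.Adj x y → x ≠ y := fun h => h.ne
          simp
          grind
      rw [e, card_map, hG]

/-- Passing from `V` to `V` plus one vertex when the degree is even: each graph is sent to
`addApex` of a chosen matching with `t` edges, and that matching, a perfect matching of the
neighbourhood of `none`, determines the graph from its image. -/
lemma card_regularGraphs_le_option (t : ℕ) (hV : 2 * t ≤ Fintype.card V) :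
    #(regularGraphs V (2 * t)) ≤ (2 * t) ^ t * #(regularGraphs (Option V) (2 * t)) := by
  have hex : ∀ G : SimpleGraph V, ∃ (W : Finset V) (σ : Equiv.Perm V),
      G ∈ regularGraphs V (2 * t) → #W = 2 * t ∧ σ ∈ matchings G W := by
    intro G
    by_cases hG : G ∈ regularGraphs V (2 * t)
    · obtain ⟨W, hW, σ, hσ⟩ := exists_matching_of_regular hG hV t le_rfl
      exact ⟨W, σ, fun _ => ⟨hW, hσ⟩⟩
    · exact ⟨∅, 1, fun h => absurd h hG⟩
  choose W σ hWσ using hex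
  refine card_le_mul_card_image_of_maps_to (f := fun G => addApex G (σ G))
    (fun G hG => addApex_mem hG (hWσ G hG).2 (hWσ G hG).1) _ fun K hK => ?_
  set N : Finset V := {x | K.Adj none (some x)} with hN
  have hNc : #N = 2 * t := by
    rw [← mem_regularGraphs.1 hK none, ← card_map .some]
    congr 1
    ext (_ | y) <;> simp [hN]
  refine le_trans ?_ (card_matchings_le (⊤ : SimpleGraph V) (2 * t) t N hNc
    fun u _ => by convert (card_filter_le N _).trans hNc.le)
  refine card_le_card_of_injOn σ ?_ ?_
  · intro G hG
    rw [mem_coe, mem_filter] at hG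
    obtain ⟨hG, rfl⟩ := hG
    obtain ⟨h1, h2, h3⟩ := mem_matchings.1 (hWσ G hG).2
    have e : N = W G := by
      ext x
      simp [hN, ← matchings_support (hWσ G hG).2]
    rw [e, mem_coe, mem_matchings]
    exact ⟨h1, fun x hx => by simpa using (h2 x hx).ne, h3⟩
  · intro G hG G' hG' hσ
    rw [mem_coe, mem_filter] at hG hG'
    obtain ⟨hG, hK1⟩ := hG
    obtain ⟨hG', hK2⟩ := hG'
    ext x y
    have e : (addApex G (σ G)).Adj (some x) (some y) ↔
        (addApex G' (σ G')).Adj (some x) (some y) := by rw [hK1, hK2]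
    have s1 := matchings_support (hWσ G hG).2
    have s2 := matchings_support (hWσ G' hG').2
    obtain ⟨a1, a2, -⟩ := mem_matchings.1 (hWσ G hG).2
    obtain ⟨b1, b2, -⟩ := mem_matchings.1 (hWσ G' hG').2
    have a3 := a1 y
    have p1 : σ G x = y → x ≠ y → (G.Adj x y ↔ G'.Adj x y) := by
      rintro rfl hne
      refine iff_of_true (a2 x ((s1 x).1 hne.symm)) ?_
      rw [hσ] at hne ⊢
      exact b2 x ((s2 x).1 hne.symm)
    have p2 : G.Adj x y → x ≠ y := fun h => h.ne
    have p3 : G'.Adj x y → x ≠ y := fun h => h.ne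
    simp only [addApex_some_some, ← hσ] at e
    grind

end Regular

/-! ### The count on `Fin n` and the asymptotics -/

section Count
open Classical

lemma card_regularGraphs_congr {V W : Type} [Fintype V] [Fintype W] (e : V ≃ W) (d : ℕ) :
    #(regularGraphs V d) = #(regularGraphs W d) := by
  refine card_equiv e.simpleGraph fun G => ?_
  rw [mem_regularGraphs, mem_regularGraphs, ← e.forall_congr_right]
  refine forall_congr' fun x => ?_
  rw [← card_map e.toEmbedding]
  have : map e.toEmbedding {y | G.Adj x y} = ({y | (e.simpleGraph G).Adj (e x) y} : Finset W) := by
    ext y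
    simp [Equiv.simpleGraph]
  rw [this]

/-- The bounds for even and odd `n` in a common form; the additional factor `D ^ D` is only needed
for odd `n`. -/
lemma pow_le_card_regularGraphs_fin (D k n : ℕ) (hD : 1 ≤ D) (hn : Even (D * n))
    (h : n / 2 = 2 * D + 2 + k) :
    (2 ^ k * k.factorial) ^ D ≤
      (D ^ (2 * D + 2 + k + 1)) ^ D * #(regularGraphs (Fin n) D) := by
  rcases Nat.even_or_odd' n with ⟨m, rfl | rfl⟩
  · refine (pow_le_card_regularGraphs (V := Fin (2 * m)) D k (by simp; omega) D le_rfl).trans ?_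
    exact Nat.mul_le_mul_right _ (Nat.pow_le_pow_left (Nat.pow_le_pow_right hD (by omega)) _)
  · have hE : Even D := by
      rw [Nat.even_mul] at hn
      exact hn.resolve_right (by simp)
    obtain ⟨t, ht⟩ := hE.two_dvd
    have h1 := pow_le_card_regularGraphs (V := Fin (2 * m)) D k (by simp; omega) D le_rfl
    have h2 := card_regularGraphs_le_option (V := Fin (2 * m)) t (by simp; omega)
    rw [← ht, card_regularGraphs_congr (finSuccEquivLast (n := 2 * m)).symm] at h2
    refine h1.trans ?_
    calc _ ≤ (D ^ (2 * D + 2 + k)) ^ D * (D ^ t * #(regularGraphs (Fin (2 * m + 1)) D)) := by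
          gcongr
      _ ≤ (D ^ (2 * D + 2 + k)) ^ D * (D ^ D * #(regularGraphs (Fin (2 * m + 1)) D)) := by
          gcongr <;> omega
      _ = _ := by rw [pow_succ, mul_pow]; ring

/-- The comparison with `m = s + k`, where `2m + 1` bounds the number of vertices. -/
lemma exists_pow_le_factorial (s : ℕ) : ∃ K : ℕ, ∀ k ≥ K,
    ((2 * ((s : ℝ) + k) + 1) / 3) ^ (s + k + 1) ≤ 2 ^ k * k.factorial := by
  have hr : 1 < 3 / Real.exp 1 := by
    rw [one_lt_div (Real.exp_pos 1)]; exact Real.exp_one_lt_three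
  set r := 3 / Real.exp 1 with hrdef
  set C : ℝ := Real.exp (s + 1) * (2 * s + 3) ^ (s + 1) with hC
  have hCpos : 0 < C := by positivity
  have ht := tendsto_pow_const_div_const_pow_of_one_lt (s + 1) hr
  obtain ⟨K, hK⟩ := Filter.eventually_atTop.1
    (ht.eventually_lt_const (show (0 : ℝ) < 1 / C by positivity))
  refine ⟨max K 1, fun k hk => ?_⟩
  have hk1 : (1 : ℝ) ≤ k := by exact_mod_cast (le_max_right K 1).trans hk
  have hkpos : (0 : ℝ) < k := by linarith
  have h1 := hK k ((le_max_left K 1).trans hk)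
  rw [div_lt_div_iff₀ (by positivity) hCpos, one_mul] at h1
  have hst : ((k : ℝ) / Real.exp 1) ^ k ≤ k.factorial := by
    have := Stirling.le_factorial_stirling k
    refine le_trans ?_ this
    refine le_mul_of_one_le_left (by positivity) ?_
    rw [Real.one_le_sqrt]
    nlinarith [Real.pi_gt_three]
  have hA : ((2 * ((s : ℝ) + k) + 1) / 3) ^ k ≤ (2 * k / 3) ^ k * Real.exp (s + 1) := by
    have e1 : (2 * ((s : ℝ) + k) + 1) / 3 ≤ 2 * k / 3 * Real.exp ((s + 1) / k) := by
      have := Real.add_one_le_exp (((s : ℝ) + 1) / k)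
      calc (2 * ((s : ℝ) + k) + 1) / 3 ≤ 2 * k / 3 * ((s + 1) / k + 1) := by
            field_simp; linarith
        _ ≤ _ := by gcongr
    calc _ ≤ (2 * k / 3 * Real.exp ((s + 1) / k)) ^ k := by gcongr
      _ = _ := by
        rw [mul_pow, ← Real.exp_nat_mul]
        congr 2
        field_simp
  have hB : ((2 * ((s : ℝ) + k) + 1) / 3) ^ (s + 1) ≤ (2 * s + 3) ^ (s + 1) * k ^ (s + 1) := by
    rw [← mul_pow]
    gcongr
    nlinarith [(Nat.cast_nonneg s : (0 : ℝ) ≤ s)]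
  calc ((2 * ((s : ℝ) + k) + 1) / 3) ^ (s + k + 1)
      = ((2 * ((s : ℝ) + k) + 1) / 3) ^ k * ((2 * ((s : ℝ) + k) + 1) / 3) ^ (s + 1) := by
        rw [← pow_add]; congr 1; omega
    _ ≤ ((2 * k / 3) ^ k * Real.exp (s + 1)) * ((2 * s + 3) ^ (s + 1) * k ^ (s + 1)) := by
        gcongr
    _ = (2 * k / 3) ^ k * (k ^ (s + 1) * C) := by rw [hC]; ring
    _ ≤ (2 * k / 3) ^ k * r ^ k := by gcongr
    _ = 2 ^ k * (k / Real.exp 1) ^ k := by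
        rw [← mul_pow, ← mul_pow, hrdef]; congr 1; field_simp
    _ ≤ _ := by gcongr

lemma ncard_regular_eq (n d : ℕ) :
    ({G : SimpleGraph (Fin n) | ∀ v, (G.neighborSet v).ncard = d} : Set (SimpleGraph (Fin n))).ncard
      = #(regularGraphs (Fin n) d) := by
  rw [← Set.ncard_coe_finset]
  congr 1
  ext G
  rw [mem_coe, mem_regularGraphs]
  refine forall_congr' fun x => ?_
  rw [← Set.ncard_coe_finset]
  have : (({y | G.Adj x y} : Finset (Fin n)) : Set (Fin n)) = G.neighborSet x := by
    ext y; simp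
  rw [this]

end Count

/-- For every `Δ ≥ 1` and all sufficiently large `n` with `Δ * n` even, the
number of labelled simple `Δ`-regular graphs on the vertex set `{1, …, n}` is
at least `(n / (3Δ)) ^ (Δn / 2)`. -/
theorem card_regular_graphs_ge (Δ : ℕ) (hΔ : 1 ≤ Δ) :
    ∃ N : ℕ, ∀ n : ℕ, N ≤ n → Even (Δ * n) →
      ((n : ℝ) / (3 * Δ)) ^ (Δ * n / 2) ≤
        ({G : SimpleGraph (Fin n) | ∀ v, (G.neighborSet v).ncard = Δ} : Set (SimpleGraph (Fin n))).ncard := by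
  obtain ⟨K, hK⟩ := exists_pow_le_factorial (2 * Δ + 2)
  refine ⟨2 * (2 * Δ + 2 + K), fun n hn he => ?_⟩
  rw [ncard_regular_eq]
  obtain ⟨k, hk⟩ : ∃ k, n / 2 = 2 * Δ + 2 + k := ⟨n / 2 - (2 * Δ + 2), by omega⟩
  have hcount := pow_le_card_regularGraphs_fin Δ k n hΔ he hk
  have hfac := hK k (by omega)
  set m := 2 * Δ + 2 + k with hm
  have hΔ0 : (0 : ℝ) < Δ := by exact_mod_cast hΔ
  have hnm : (n : ℝ) ≤ 2 * m + 1 := by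
    have : n ≤ 2 * m + 1 := by omega
    exact_mod_cast this
  have hbase : 1 ≤ (n : ℝ) / (3 * Δ) := by
    rw [one_le_div (by positivity)]
    have : 3 * Δ ≤ n := by omega
    exact_mod_cast this
  have hexp : Δ * n / 2 ≤ (m + 1) * Δ := by
    have : Δ * n ≤ Δ * (2 * (m + 1)) := Nat.mul_le_mul_left _ (by omega)
    have e : Δ * (2 * (m + 1)) = 2 * ((m + 1) * Δ) := by ring
    omega
  -- The desired inequality follows from its `Δ`-th root, in which the powers of `Δ` cancel.
  have hroot : (Δ : ℝ) ^ (m + 1) * ((n : ℝ) / (3 * Δ)) ^ (m + 1) ≤ 2 ^ k * k.factorial := by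
    refine le_trans ?_ hfac
    rw [← mul_pow]
    gcongr
    have : (Δ : ℝ) * (n / (3 * Δ)) = n / 3 := by field_simp
    rw [this]
    gcongr
    rw [hm] at hnm
    push_cast at hnm ⊢
    linarith
  have hcount' : ((2 : ℝ) ^ k * k.factorial) ^ Δ ≤
      ((Δ : ℝ) ^ (m + 1)) ^ Δ * #(regularGraphs (Fin n) Δ) := by exact_mod_cast hcount
  refine (pow_le_pow_right₀ hbase hexp).trans ?_
  refine le_of_mul_le_mul_left ?_ (show (0 : ℝ) < ((Δ : ℝ) ^ (m + 1)) ^ Δ by positivity)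
  refine le_trans ?_ hcount'
  rw [pow_mul, ← mul_pow]
  gcongr
end

section
/- An ordered graph G is a k-queue if and only if G contains no rainbow consisting of k+1 edges. -/
/-!
This is the dual (easy) form of Dilworth's theorem, Mirsky's theorem, for the strict order
"`f` lies strictly inside `e`", in which rainbows are the chains and queues are the antichains.

A queue contains at most one edge of a rainbow, so by pigeonhole a `k`-queue has no rainbow of
`k + 1` edges. Conversely, assign to each edge its height `edgeHeight`, the largest size of a
rainbow strictly inside it. Heights strictly decrease when passing to an edge strictly inside
(`edgeHeight_lt_of_inside`), so each level set of the height is a queue; and an edge of height `h`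
is the outermost edge of a rainbow of size `h + 1` (`exists_rainbow_of_edgeHeight`), so without
rainbows of size `k + 1` only the heights `0, …, k - 1` occur.
-/

/-- Two edges `(v,w)` and `(x,y)` (each with first coordinate ≤ second) of an
ordered graph are nested (one is nested inside the other). -/
def Nested (e f : ℕ × ℕ) : Prop :=
  (e.1 < f.1 ∧ f.2 < e.2) ∨ (f.1 < e.1 ∧ e.2 < f.2)

/-- `E` is the edge set of an ordered graph on the vertex set `{1, …, n}`:
each edge is a pair `(v,w)` with `1 ≤ v ≤ w ≤ n` (loops allowed, no parallel edges). -/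
def IsOrderedGraph (n : ℕ) (E : Finset (ℕ × ℕ)) : Prop :=
  ∀ e ∈ E, 1 ≤ e.1 ∧ e.1 ≤ e.2 ∧ e.2 ≤ n

/-- An edge set is a queue if no two of its edges are nested. -/
def IsQueue (E : Finset (ℕ × ℕ)) : Prop :=
  ∀ e ∈ E, ∀ f ∈ E, ¬ Nested e f

/-- An edge set is a `k`-queue if it can be partitioned into at most `k` parts,
each of which is a queue. -/
def IsKQueue (k : ℕ) (E : Finset (ℕ × ℕ)) : Prop :=
  ∃ parts : Fin k → Finset (ℕ × ℕ),
    (∀ e ∈ E, ∃ i, e ∈ parts i) ∧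
    (∀ i, parts i ⊆ E) ∧
    (∀ i j, i ≠ j → Disjoint (parts i) (parts j)) ∧
    (∀ i, IsQueue (parts i))

/-- A rainbow: a set of pairwise nested edges. -/
def IsRainbow (R : Finset (ℕ × ℕ)) : Prop :=
  ∀ e ∈ R, ∀ f ∈ R, e ≠ f → Nested e f

open Classical in
/-- The height of `e` in `E`: the largest size of a rainbow of `E` all of whose edges lie
strictly inside `e`. The edge `e` itself is not counted. -/
noncomputable def edgeHeight (E : Finset (ℕ × ℕ)) (e : ℕ × ℕ) : ℕ :=
  (E.powerset.filter fun R => IsRainbow R ∧ ∀ f ∈ R, e.1 < f.1 ∧ f.2 < e.2).sup Finset.card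

/-- Adding `e` to a largest rainbow strictly inside it gives a rainbow with one more edge. -/
lemma exists_rainbow_of_edgeHeight (E : Finset (ℕ × ℕ)) (e : ℕ × ℕ) (he : e ∈ E) :
    ∃ R ⊆ E, IsRainbow R ∧ R.card = edgeHeight E e + 1 ∧
      ∀ f ∈ R, e.1 ≤ f.1 ∧ f.2 ≤ e.2 := by
  classical
  obtain ⟨R, hR, hcard⟩ := Finset.exists_mem_eq_sup
    (E.powerset.filter fun R => IsRainbow R ∧ ∀ f ∈ R, e.1 < f.1 ∧ f.2 < e.2)
    ⟨∅, by simp [IsRainbow]⟩ Finset.card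
  simp only [Finset.mem_filter, Finset.mem_powerset] at hR
  obtain ⟨hRE, hrain, hin⟩ := hR
  have heR : e ∉ R := fun h => lt_irrefl _ (hin e h).1
  refine ⟨insert e R, Finset.insert_subset he hRE, ?_, ?_, ?_⟩
  · intro a ha b hb hab
    rcases Finset.mem_insert.1 ha with rfl | haR
    · rcases Finset.mem_insert.1 hb with rfl | hbR
      · exact absurd rfl hab
      · exact Or.inl (hin b hbR)
    · rcases Finset.mem_insert.1 hb with rfl | hbR
      · exact Or.inr (hin a haR)
      · exact hrain a haR b hbR hab
  · rw [Finset.card_insert_of_notMem heR, ← hcard]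
    unfold edgeHeight
    congr!
  · intro f hf
    rcases Finset.mem_insert.1 hf with rfl | hf
    · exact ⟨le_rfl, le_rfl⟩
    · exact ⟨(hin f hf).1.le, (hin f hf).2.le⟩

lemma edgeHeight_lt_of_inside {E : Finset (ℕ × ℕ)} {e f : ℕ × ℕ} (hf : f ∈ E)
    (h : e.1 < f.1 ∧ f.2 < e.2) : edgeHeight E f < edgeHeight E e := by
  classical
  obtain ⟨R, hRE, hrain, hcard, hin⟩ := exists_rainbow_of_edgeHeight E f hf
  have : R.card ≤ edgeHeight E e := by
    unfold edgeHeight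
    refine Finset.le_sup (f := Finset.card) ?_
    simp only [Finset.mem_filter, Finset.mem_powerset]
    exact ⟨hRE, hrain, fun g hg => ⟨h.1.trans_le (hin g hg).1, (hin g hg).2.trans_lt h.2⟩⟩
  omega

/-- An ordered graph `G` is a `k`-queue if and only if `G` contains no rainbow
(set of pairwise nested edges) consisting of `k + 1` edges. -/
theorem isKQueue_iff_no_rainbow (n k : ℕ) (E : Finset (ℕ × ℕ))
    (hE : IsOrderedGraph n E) :
    IsKQueue k E ↔
      ¬ ∃ R : Finset (ℕ × ℕ), R ⊆ E ∧ R.card = k + 1 ∧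
        ∀ e ∈ R, ∀ f ∈ R, e ≠ f → Nested e f := by
  classical
  constructor
  · rintro ⟨parts, hcov, -, -, hq⟩ ⟨R, hRE, hcard, hrain⟩
    choose c hc using hcov
    -- Pigeonhole: two of the `k + 1` edges of the rainbow lie in the same queue.
    have hlt : Fintype.card (Fin k) < Fintype.card R := by simp [hcard]
    obtain ⟨a, b, hab, heq⟩ :=
      Fintype.exists_ne_map_eq_of_card_lt
        (fun e : R => c e (hRE e.2)) hlt
    have ha := hc a (hRE a.2)
    have hb := hc b (hRE b.2)
    rw [← heq] at hb
    exact hq _ a ha b hb (hrain a a.2 b b.2 fun h => hab (Subtype.ext h))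
  · intro hno
    have hlt : ∀ e ∈ E, edgeHeight E e < k := by
      intro e he
      by_contra! hk
      obtain ⟨R, hRE, hrain, hcard, -⟩ := exists_rainbow_of_edgeHeight E e he
      -- A rainbow with more than `k` edges contains one with exactly `k + 1`.
      obtain ⟨S, hSR, hS⟩ := Finset.exists_subset_card_eq (show k + 1 ≤ R.card by omega)
      exact hno ⟨S, hSR.trans hRE, hS, fun a ha b hb => hrain a (hSR ha) b (hSR hb)⟩
    refine ⟨fun i => E.filter fun e => edgeHeight E e = i, ?_, ?_, ?_, ?_⟩
    · exact fun e he => ⟨⟨_, hlt e he⟩, by simp [he]⟩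
    · exact fun i => Finset.filter_subset _ _
    · intro i j hij
      refine Finset.disjoint_left.2 fun e hi hj => hij (Fin.ext ?_)
      rw [← (Finset.mem_filter.1 hi).2, (Finset.mem_filter.1 hj).2]
    · intro i e he f hf hnest
      rw [Finset.mem_filter] at he hf
      rcases hnest with h | h
      · have := edgeHeight_lt_of_inside hf.1 h
        omega
      · have := edgeHeight_lt_of_inside he.1 h
        omega
end

section
/- Let g(n) denote the number of queues on the vertex set {1,…,n}. Then for every positive integer n, g(2n) ≤ 11^(2n−1) · g(n). -/
/-- `queueCount n` is the number `g(n)` of queues on the vertex set `{1, …, n}`,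
i.e. the number of edge sets `E ⊆ {(v,w) : 1 ≤ v ≤ w ≤ n}` with no two nested edges. -/
noncomputable def queueCount (n : ℕ) : ℕ :=
  {E : Finset (ℕ × ℕ) | IsOrderedGraph n E ∧ IsQueue E}.ncard

open Classical in
/-- The queues on `{1, …, n}`, as a `Finset`. -/
noncomputable def queues (n : ℕ) : Finset (Finset (ℕ × ℕ)) :=
  ((Finset.Icc 1 n ×ˢ Finset.Icc 1 n).powerset).filter
    fun E => IsOrderedGraph n E ∧ IsQueue E

lemma mem_queues {n : ℕ} {E : Finset (ℕ × ℕ)} :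
    E ∈ queues n ↔ IsOrderedGraph n E ∧ IsQueue E := by
  simp only [queues, Finset.mem_filter, Finset.mem_powerset, and_iff_right_iff_imp]
  rintro ⟨h, -⟩ e he
  have := h e he
  simp only [Finset.mem_product, Finset.mem_Icc]
  omega

lemma queueCount_eq_card (n : ℕ) : queueCount n = (queues n).card := by
  rw [queueCount, ← Set.ncard_coe_finset]
  congr 1
  ext E
  simp [mem_queues]

/-- The effect on edges of merging the vertices `2i - 1` and `2i` into `i`. -/
def contract (e : ℕ × ℕ) : ℕ × ℕ := ((e.1 + 1) / 2, (e.2 + 1) / 2)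

/-- The four pairs contracting to `h`; bit `0` selects the odd vertex `2a - 1` above a vertex `a`,
bit `1` the even vertex `2a`. (For `a ≥ 1` the subtraction does not truncate.) -/
def lift (h : ℕ × ℕ) (p : Fin 2 × Fin 2) : ℕ × ℕ := (2 * h.1 + p.1 - 1, 2 * h.2 + p.2 - 1)

/-- The nonempty subsets of a `2 × 2` block that omit one of the two potentially nested edges. -/
def patterns : Finset (Finset (Fin 2 × Fin 2)) :=
  Finset.univ.filter fun S => S.Nonempty ∧ ¬ ((0, 1) ∈ S ∧ (1, 0) ∈ S)

lemma card_patterns : patterns.card = 11 := by decide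

lemma exists_lift_contract {e : ℕ × ℕ} (h1 : 1 ≤ e.1) (h2 : 1 ≤ e.2) :
    ∃ p, lift (contract e) p = e := by
  refine ⟨(⟨(e.1 + 1) % 2, by omega⟩, ⟨(e.2 + 1) % 2, by omega⟩), ?_⟩
  ext <;> simp only [lift, contract] <;> omega

lemma image_contract_mem {n : ℕ} {E : Finset (ℕ × ℕ)} (hE : E ∈ queues (2 * n)) :
    E.image contract ∈ queues n := by
  rw [mem_queues] at hE ⊢
  obtain ⟨hG, hQ⟩ := hE
  constructor
  · intro e he
    obtain ⟨e', he', rfl⟩ := Finset.mem_image.1 he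
    have := hG e' he'
    simp only [contract]
    omega
  · intro e he f hf hN
    obtain ⟨e', he', rfl⟩ := Finset.mem_image.1 he
    obtain ⟨f', hf', rfl⟩ := Finset.mem_image.1 hf
    apply hQ e' he' f' hf'
    simp only [Nested, contract] at hN ⊢
    omega

lemma card_le_of_mem_queues {n : ℕ} {H : Finset (ℕ × ℕ)} (hH : H ∈ queues n) :
    H.card ≤ 2 * n - 1 := by
  obtain ⟨hG, hQ⟩ := mem_queues.1 hH
  have : H.card ≤ (Finset.Icc 2 (2 * n)).card := by
    apply Finset.card_le_card_of_injOn (fun e => e.1 + e.2)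
    · intro e he
      have := hG e he
      simp only [Finset.coe_Icc, Set.mem_Icc]
      omega
    · intro e he f hf hef
      have := hQ e he f hf
      simp only [Nested] at this hef
      ext <;> omega
  rw [Nat.card_Icc] at this
  omega

/-- A queue is determined by its contraction `H` together with one of the 11 patterns for each edge
of `H`. -/
lemma card_fiber_le {n : ℕ} (H : Finset (ℕ × ℕ)) :
    ((queues (2 * n)).filter fun E => E.image contract = H).card ≤ 11 ^ H.card := by
  have key : ((queues (2 * n)).filter fun E => E.image contract = H).card
      ≤ (H.pi fun _ => patterns).card := by
    apply Finset.card_le_card_of_injOn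
      (fun E h _ => Finset.univ.filter fun p => lift h p ∈ E)
    · intro E hE
      rw [Finset.mem_coe, Finset.mem_filter] at hE
      obtain ⟨hE, rfl⟩ := hE
      obtain ⟨hG, hQ⟩ := mem_queues.1 hE
      rw [Finset.mem_coe, Finset.mem_pi]
      intro h hh
      obtain ⟨e, he, rfl⟩ := Finset.mem_image.1 hh
      have hb := hG e he
      simp only [patterns, Finset.mem_filter, Finset.mem_univ, true_and]
      constructor
      · obtain ⟨p, hp⟩ := exists_lift_contract (e := e) (by omega) (by omega)
        exact ⟨p, by simpa [hp] using he⟩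
      · rintro ⟨h01, h10⟩
        have hle := hG _ h10
        apply hQ _ h01 _ h10
        simp [Nested, lift, contract] at hle ⊢
        omega
    · intro E hE F hF hEF
      -- The hypotheses are symmetric in `E` and `F`, so one inclusion suffices.
      have sub : ∀ E F : Finset (ℕ × ℕ), E ∈ queues (2 * n) → E.image contract = H →
          (∀ h ∈ H, ∀ p, lift h p ∈ E ↔ lift h p ∈ F) → E ⊆ F := by
        intro E F hE hEH hiff e he
        have hb := (mem_queues.1 hE).1 e he
        obtain ⟨p, hp⟩ := exists_lift_contract (e := e) (by omega) (by omega)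
        have := hiff (contract e) (hEH ▸ Finset.mem_image_of_mem _ he) p
        rw [hp] at this
        exact this.1 he
      have hiff : ∀ h ∈ H, ∀ p, lift h p ∈ E ↔ lift h p ∈ F := by
        intro h hh p
        have := congrArg (p ∈ ·) (congrFun (congrFun hEF h) hh)
        simpa using this
      rw [Finset.mem_coe, Finset.mem_filter] at hE hF
      obtain ⟨hE, hEH⟩ := hE
      obtain ⟨hF, hFH⟩ := hF
      exact (sub E F hE hEH hiff).antisymm
        (sub F E hF hFH fun h hh p => (hiff h hh p).symm)
  simpa [Finset.card_pi, card_patterns] using key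

/-- For every positive integer `n`, `g(2n) ≤ 11 ^ (2n - 1) * g(n)`. -/
theorem queueCount_two_mul_le (n : ℕ) (hn : 0 < n) :
    queueCount (2 * n) ≤ 11 ^ (2 * n - 1) * queueCount n := by
  rw [queueCount_eq_card, queueCount_eq_card]
  apply Finset.card_le_mul_card_image_of_maps_to (f := fun E => E.image contract)
  · exact fun E hE => image_contract_mem hE
  · intro H hH
    exact (card_fiber_le H).trans (Nat.pow_le_pow_right (by norm_num) (card_le_of_mem_queues hH))
end

section
/- There is an absolute constant c > 0 such that for every positive integer n, the number g(n) of queues on the vertex set {1,…,n} satisfies g(n) ≤ c^n (in particular one may take c = 121, i.e. g(n) ≤ 11^(2n)). -/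
open Classical in
/-- The sets of points in the grid `{1, …, a} × {1, …, b}` without a nested pair. The condition
`v ≤ w` on edges `(v, w)` is dropped, so that the two side lengths can vary independently. -/
noncomputable def gridQueues (a b : ℕ) : Finset (Finset (ℕ × ℕ)) :=
  (Finset.Icc 1 a ×ˢ Finset.Icc 1 b).powerset.filter IsQueue

lemma mem_gridQueues {a b : ℕ} {E : Finset (ℕ × ℕ)} :
    E ∈ gridQueues a b ↔
      (∀ e ∈ E, (1 ≤ e.1 ∧ e.1 ≤ a) ∧ 1 ≤ e.2 ∧ e.2 ≤ b) ∧ IsQueue E := by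
  simp only [gridQueues, Finset.mem_filter, Finset.mem_powerset, Finset.subset_iff,
    Finset.mem_product, Finset.mem_Icc]

/-- A queue avoiding the corner of a grid misses the last column or the last row. -/
lemma mem_smaller_grid {a b : ℕ} {E : Finset (ℕ × ℕ)} (hE : E ∈ gridQueues (a + 1) (b + 1))
    (hp : (a + 1, b + 1) ∉ E) : E ∈ gridQueues a (b + 1) ∪ gridQueues (a + 1) b := by
  obtain ⟨hb, hq⟩ := mem_gridQueues.1 hE
  rw [Finset.mem_union, mem_gridQueues, mem_gridQueues]
  by_cases h : ∃ e ∈ E, e.1 = a + 1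
  · obtain ⟨e, he, hea⟩ := h
    have heb : e.2 ≠ b + 1 := fun h2 => hp (by rwa [← hea, ← h2])
    refine Or.inr ⟨fun f hf => ?_, hq⟩
    have h1 := hb e he
    have h2 := hb f hf
    have hfp : ¬ (f.1 = a + 1 ∧ f.2 = b + 1) := fun h3 => hp (by rwa [← h3.1, ← h3.2])
    have hn := hq e he f hf
    unfold Nested at hn
    omega
  · push Not at h
    refine Or.inl ⟨fun f hf => ?_, hq⟩
    have h1 := hb f hf
    have h2 := h f hf
    omega

lemma IsQueue.erase {E : Finset (ℕ × ℕ)} (hE : IsQueue E) (p : ℕ × ℕ) : IsQueue (E.erase p) :=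
  fun e he f hf => hE e (Finset.mem_of_mem_erase he) f (Finset.mem_of_mem_erase hf)

lemma card_gridQueues_succ_le (a b : ℕ) :
    (gridQueues (a + 1) (b + 1)).card ≤
      2 * ((gridQueues a (b + 1)).card + (gridQueues (a + 1) b).card) := by
  set U := gridQueues a (b + 1) ∪ gridQueues (a + 1) b with hU
  have hsub : gridQueues (a + 1) (b + 1) ⊆ U ∪ U.image (insert (a + 1, b + 1)) := by
    intro E hE
    by_cases hp : (a + 1, b + 1) ∈ E
    · refine Finset.mem_union_right _ (Finset.mem_image.2
        ⟨E.erase (a + 1, b + 1), mem_smaller_grid ?_ (Finset.notMem_erase _ _),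
          Finset.insert_erase hp⟩)
      obtain ⟨hb, hq⟩ := mem_gridQueues.1 hE
      exact mem_gridQueues.2 ⟨fun e he => hb e (Finset.mem_of_mem_erase he), hq.erase _⟩
    · exact Finset.mem_union_left _ (mem_smaller_grid hE hp)
  have h1 := Finset.card_le_card hsub
  have h2 := Finset.card_union_le U (U.image (insert (a + 1, b + 1)))
  have h3 : (U.image (insert (a + 1, b + 1))).card ≤ U.card := Finset.card_image_le
  have h4 := Finset.card_union_le (gridQueues a (b + 1)) (gridQueues (a + 1) b)
  rw [← hU] at h4
  omega

open Classical in
lemma card_gridQueues_le (a b : ℕ) : (gridQueues a b).card ≤ 4 ^ (a + b) := by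
  induction a generalizing b with
  | zero =>
    refine le_trans (Finset.card_le_card (Finset.filter_subset _ _)) ?_
    simpa using Nat.one_le_pow _ _ (by norm_num)
  | succ a iha =>
    induction b with
    | zero =>
      refine le_trans (Finset.card_le_card (Finset.filter_subset _ _)) ?_
      simpa using Nat.one_le_pow _ _ (by norm_num)
    | succ b ihb =>
      have h := card_gridQueues_succ_le a b
      have ha := iha (b + 1)
      have e1 : 4 ^ (a + (b + 1)) = 4 ^ (a + 1 + b) := by congr 1; omega
      have e2 : 4 ^ (a + 1 + (b + 1)) = 4 * 4 ^ (a + 1 + b) := by ring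
      omega

/-- The number `g(n)` of queues on the vertex set `{1, …, n}` satisfies
`g(n) ≤ c ^ n` for the absolute constant `c = 121 = 11 ^ 2`,
i.e. `g(n) ≤ 11 ^ (2 * n)`. -/
theorem queueCount_le_pow (n : ℕ) (hn : 0 < n) :
    queueCount n ≤ 121 ^ n := by
  have hsub : {E : Finset (ℕ × ℕ) | IsOrderedGraph n E ∧ IsQueue E} ⊆ ↑(gridQueues n n) := by
    rintro E ⟨hE, hq⟩
    refine mem_gridQueues.2 ⟨fun e he => ?_, hq⟩
    have := hE e he
    omega
  calc queueCount n ≤ (↑(gridQueues n n) : Set (Finset (ℕ × ℕ))).ncard :=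
        Set.ncard_le_ncard hsub (Finset.finite_toSet _)
    _ = (gridQueues n n).card := Set.ncard_coe_finset _
    _ ≤ 4 ^ (n + n) := card_gridQueues_le n n
    _ = 16 ^ n := by rw [← two_mul, pow_mul]; norm_num
    _ ≤ 121 ^ n := Nat.pow_le_pow_left (by norm_num) n
end

section
/- There is an absolute constant c > 0 such that for all positive integers n and k, the number of k-queues on the vertex set {1,…,n} is at most c^(k·n). -/
/-- `kQueueCount n k` is the number of `k`-queues on the vertex set `{1, …, n}`:
the number of edge sets `E ⊆ {(v,w) : 1 ≤ v ≤ w ≤ n}` that can be partitioned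
into at most `k` parts, each with no two nested edges. -/
noncomputable def kQueueCount (n k : ℕ) : ℕ :=
  {E : Finset (ℕ × ℕ) | IsOrderedGraph n E ∧ IsKQueue k E}.ncard

/-- The first coordinate, at time `s`, of a monotone lattice path which, if `Q` is a queue, passes
through all edges of `Q`, an edge `(v, w)` being met at time `v + w`.
The subtraction is truncated, so every term of the supremum vanishes at `s = 0`. -/
def pathHeight (Q : Finset (ℕ × ℕ)) (s : ℕ) : ℕ :=
  Q.sup fun e => min e.1 (s - e.2)

lemma pathHeight_zero (Q : Finset (ℕ × ℕ)) : pathHeight Q 0 = 0 := by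
  simp [pathHeight]

lemma pathHeight_le_succ (Q : Finset (ℕ × ℕ)) (s : ℕ) :
    pathHeight Q s ≤ pathHeight Q (s + 1) :=
  Finset.sup_mono_fun fun _ _ => by omega

lemma pathHeight_succ_le (Q : Finset (ℕ × ℕ)) (s : ℕ) :
    pathHeight Q (s + 1) ≤ pathHeight Q s + 1 := by
  refine Finset.sup_le fun e he => ?_
  have h : min e.1 (s - e.2) ≤ pathHeight Q s :=
    Finset.le_sup (f := fun e : ℕ × ℕ => min e.1 (s - e.2)) he
  omega

/-- The path passes through every edge of a queue. -/
lemma pathHeight_eq {Q : Finset (ℕ × ℕ)} (hQ : IsQueue Q) {e : ℕ × ℕ} (he : e ∈ Q) :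
    pathHeight Q (e.1 + e.2) = e.1 := by
  apply le_antisymm
  · refine Finset.sup_le fun f hf => ?_
    have h := hQ e he f hf
    unfold Nested at h
    omega
  · have h : min e.1 (e.1 + e.2 - e.2) ≤ pathHeight Q (e.1 + e.2) :=
      Finset.le_sup (f := fun f : ℕ × ℕ => min f.1 (e.1 + e.2 - f.2)) he
    omega

/-- The number of steps before time `s`, for a path whose set of step times is `D`. -/
def stepCount {m : ℕ} (D : Finset (Fin m)) (s : ℕ) : ℕ :=
  (D.filter fun d => d.val < s).card

/-- The edge set coded by `(S, D)`: the points, at the times in `S`, of the lattice path whose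
first coordinate increases exactly at the times in `D`. -/
def decode {m : ℕ} (p : Finset (Fin m) × Finset (Fin m)) : Finset (ℕ × ℕ) :=
  p.1.image fun s => (stepCount p.2 s.val, s.val - stepCount p.2 s.val)

lemma stepCount_succ {m : ℕ} (D : Finset (Fin m)) (s : Fin m) :
    stepCount D (s.val + 1) = stepCount D s.val + if s ∈ D then 1 else 0 := by
  unfold stepCount
  split_ifs with h
  · have : (D.filter fun d => d.val < s.val + 1) =
        insert s (D.filter fun d => d.val < s.val) := by
      ext d
      simp only [Finset.mem_filter, Finset.mem_insert, Fin.ext_iff]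
      constructor
      · rintro ⟨h1, h2⟩
        by_cases h3 : d.val = s.val
        · exact Or.inl h3
        · exact Or.inr ⟨h1, by omega⟩
      · rintro (h1 | ⟨h1, h2⟩)
        · obtain rfl := Fin.ext h1
          exact ⟨h, by omega⟩
        · exact ⟨h1, by omega⟩
    rw [this, Finset.card_insert_of_notMem (by simp)]
  · rw [add_zero]
    congr 1
    refine Finset.filter_congr fun d hd => ?_
    have : d.val ≠ s.val := fun h' => h (Fin.ext h' ▸ hd)
    omega

lemma exists_decode_eq {n : ℕ} {Q : Finset (ℕ × ℕ)} (hn : IsOrderedGraph n Q)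
    (hQ : IsQueue Q) :
    ∃ p : Finset (Fin (2 * n + 1)) × Finset (Fin (2 * n + 1)), decode p = Q := by
  classical
  let S : Finset (Fin (2 * n + 1)) := Finset.univ.filter fun s => ∃ e ∈ Q, e.1 + e.2 = s.val
  let D : Finset (Fin (2 * n + 1)) :=
    Finset.univ.filter fun s => pathHeight Q (s.val + 1) ≠ pathHeight Q s.val
  have key : ∀ s, s ≤ 2 * n → stepCount D s = pathHeight Q s := by
    intro s
    induction s with
    | zero => intro _; simp [stepCount, pathHeight_zero]
    | succ s ih =>
      intro hs
      have h1 := stepCount_succ D ⟨s, by omega⟩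
      have h2 := ih (by omega)
      have h3 := pathHeight_le_succ Q s
      have h4 := pathHeight_succ_le Q s
      simp only [D, Finset.mem_filter, Finset.mem_univ, true_and] at h1 h2 ⊢
      split_ifs at h1 <;> omega
  have point : ∀ e ∈ Q, (stepCount D (e.1 + e.2), e.1 + e.2 - stepCount D (e.1 + e.2)) = e := by
    intro e he
    have := hn e he
    rw [key _ (by omega), pathHeight_eq hQ he]
    simp
  refine ⟨(S, D), ?_⟩
  ext e
  simp only [decode, Finset.mem_image]
  constructor
  · rintro ⟨s, hs, rfl⟩
    obtain ⟨f, hf, hfs⟩ := (Finset.mem_filter.mp hs).2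
    rw [← hfs, point f hf]
    exact hf
  · intro he
    have := hn e he
    exact ⟨⟨e.1 + e.2, by omega⟩, Finset.mem_filter.mpr ⟨Finset.mem_univ _, e, he, rfl⟩,
      point e he⟩

/-- There is an absolute constant `c > 0` such that the number of `k`-queues on
the vertex set `{1, …, n}` is at most `c ^ (k * n)`. -/
theorem kQueueCount_le_pow :
    ∃ c : ℕ, 0 < c ∧ ∀ n k : ℕ, 0 < n → 0 < k →
      kQueueCount n k ≤ c ^ (k * n) := by
  classical
  refine ⟨64, by norm_num, fun n k hn _ => ?_⟩
  let F : (Fin k → Finset (Fin (2 * n + 1)) × Finset (Fin (2 * n + 1))) → Finset (ℕ × ℕ) :=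
    fun p => Finset.univ.biUnion fun i => decode (p i)
  have hsub : {E : Finset (ℕ × ℕ) | IsOrderedGraph n E ∧ IsKQueue k E} ⊆ Set.image F Set.univ := by
    rintro E ⟨hE, parts, hcover, hparts, -, hqueue⟩
    choose p hp using fun i =>
      exists_decode_eq (fun e he => hE e (hparts i he)) (hqueue i)
    refine ⟨p, Set.mem_univ _, ?_⟩
    ext e
    simp only [F, hp, Finset.mem_biUnion, Finset.mem_univ, true_and]
    exact ⟨fun ⟨i, hi⟩ => hparts i hi, hcover e⟩
  calc kQueueCount n k ≤ (Set.image F Set.univ).ncard :=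
        Set.ncard_le_ncard hsub (Set.toFinite _)
    _ ≤ (Set.univ : Set (Fin k → Finset (Fin (2 * n + 1)) × Finset (Fin (2 * n + 1)))).ncard :=
        Set.ncard_image_le (Set.toFinite _)
    _ = 2 ^ ((4 * n + 2) * k) := by
        rw [Set.ncard_univ, Nat.card_eq_fintype_card]
        simp only [Fintype.card_fun, Fintype.card_prod, Fintype.card_finset, Fintype.card_fin]
        rw [← pow_add, ← pow_mul]
        congr 2
        ring
    _ ≤ 2 ^ (6 * (k * n)) := Nat.pow_le_pow_right (by norm_num) (by nlinarith)
    _ = 64 ^ (k * n) := by rw [pow_mul]; norm_num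
end

section
/- There is an absolute constant c > 0 such that, letting g(n,m) denote the number of queues on the vertex set {1,…,n} having exactly m edges: if m ≤ n/2 then g(n,m) ≤ C(n, 2m) · c^(2m) (where C(n,2m) is the binomial coefficient), and for all m one has g(n,m) ≤ c^n. -/
/-- `queueCountE n m` is the number `g(n,m)` of queues on the vertex set
`{1, …, n}` having exactly `m` edges. -/
noncomputable def queueCountE (n m : ℕ) : ℕ :=
  {E : Finset (ℕ × ℕ) | IsOrderedGraph n E ∧ IsQueue E ∧ E.card = m}.ncard

namespace QueueBound

open Finset

/-- The rank of `x` in `V`: the number of elements of `V` that are at most `x`. -/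
def rank (V : Finset ℕ) (x : ℕ) : ℕ := #{y ∈ V | y ≤ x}

lemma rank_mono (V : Finset ℕ) {x y : ℕ} (h : x ≤ y) : rank V x ≤ rank V y := by
  apply card_le_card
  intro z hz
  simp only [mem_filter] at hz ⊢
  exact ⟨hz.1, hz.2.trans h⟩

lemma rank_lt (V : Finset ℕ) {x y : ℕ} (hy : y ∈ V) (h : x < y) : rank V x < rank V y := by
  apply card_lt_card
  refine ⟨fun z hz => ?_, fun hs => ?_⟩
  · simp only [mem_filter] at hz ⊢
    exact ⟨hz.1, hz.2.trans h.le⟩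
  · have := hs (mem_filter.2 ⟨hy, le_rfl⟩)
    simp only [mem_filter] at this
    omega

lemma rank_inj (V : Finset ℕ) {x y : ℕ} (hx : x ∈ V) (hy : y ∈ V) (h : rank V x = rank V y) :
    x = y := by
  rcases lt_trichotomy x y with hlt | heq | hlt
  · exact absurd h (rank_lt V hy hlt).ne
  · exact heq
  · exact absurd h (rank_lt V hx hlt).ne'

lemma rank_pos (V : Finset ℕ) {x : ℕ} (hx : x ∈ V) : 1 ≤ rank V x :=
  card_pos.2 ⟨x, mem_filter.2 ⟨hx, le_rfl⟩⟩

lemma rank_le (V : Finset ℕ) (x : ℕ) : rank V x ≤ #V := card_filter_le _ _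

/-- The sum of the ranks in `V` of the two endpoints of an edge. -/
def rankSum (V : Finset ℕ) (e : ℕ × ℕ) : ℕ := rank V e.1 + rank V e.2

/-- The leading edges of `E`: those with the least right endpoint among the edges of `E` with the
same left endpoint. -/
def leading (E : Finset (ℕ × ℕ)) : Finset (ℕ × ℕ) :=
  {e ∈ E | ∀ f ∈ E, f.1 = e.1 → e.2 ≤ f.2}

/-- The code of an edge set: left endpoints, rank sums, rank sums of the leading edges. -/
def code (V : Finset ℕ) (E : Finset (ℕ × ℕ)) : Finset ℕ × Finset ℕ × Finset ℕ :=
  (E.image Prod.fst, E.image (rankSum V), (leading E).image (rankSum V))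

open Classical in
/-- The queues all of whose edges have both endpoints in `V`. -/
noncomputable def queuesOn (V : Finset ℕ) : Finset (Finset (ℕ × ℕ)) :=
  {E ∈ (V ×ˢ V).powerset | IsQueue E}

lemma mem_queuesOn {V : Finset ℕ} {E : Finset (ℕ × ℕ)} :
    E ∈ queuesOn V ↔ E ⊆ V ×ˢ V ∧ IsQueue E := by
  simp [queuesOn]

lemma IsQueue.snd_le {E : Finset (ℕ × ℕ)} (hE : IsQueue E) {e f : ℕ × ℕ} (he : e ∈ E)
    (hf : f ∈ E) (h : e.1 < f.1) : e.2 ≤ f.2 := by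
  by_contra hlt
  exact hE e he f hf (Or.inl ⟨h, not_le.1 hlt⟩)

lemma leading_fst (E : Finset (ℕ × ℕ)) : (leading E).image Prod.fst = E.image Prod.fst := by
  apply Subset.antisymm (image_subset_image (filter_subset _ _))
  intro a ha
  obtain ⟨e, he, rfl⟩ := mem_image.1 ha
  obtain ⟨f, hf, hmin⟩ := exists_min_image {f ∈ E | f.1 = e.1} Prod.snd
    ⟨e, mem_filter.2 ⟨he, rfl⟩⟩
  rw [mem_filter] at hf
  refine mem_image.2 ⟨f, mem_filter.2 ⟨hf.1, fun g hg hgf => ?_⟩, hf.2⟩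
  exact hmin g (mem_filter.2 ⟨hg, hgf.trans hf.2⟩)

lemma leading_le_iff {V : Finset ℕ} {E : Finset (ℕ × ℕ)} (hE : E ∈ queuesOn V)
    {e l : ℕ × ℕ} (he : e ∈ E) (hl : l ∈ leading E) :
    l.1 ≤ e.1 ↔ rankSum V l ≤ rankSum V e := by
  rw [mem_queuesOn] at hE
  obtain ⟨hlE, hmin⟩ := mem_filter.1 hl
  constructor
  · intro h
    have h2 : l.2 ≤ e.2 := by
      rcases h.lt_or_eq with h | h
      · exact IsQueue.snd_le hE.2 hlE he h
      · exact hmin e he h.symm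
    exact add_le_add (rank_mono V h) (rank_mono V h2)
  · intro h
    by_contra! hlt
    have h1 := rank_lt V (mem_product.1 (hE.1 hlE)).1 hlt
    have h2 := rank_mono V (IsQueue.snd_le hE.2 he hlE hlt)
    simp only [rankSum] at h
    omega

/-- The position of the left endpoint of an edge among all left endpoints can be read off from its
rank sum and the rank sums of the leading edges: both sides count the leading edges whose
left endpoint is at most that of `e`. -/
lemma card_left_eq {V : Finset ℕ} {E : Finset (ℕ × ℕ)} (hE : E ∈ queuesOn V)
    {e : ℕ × ℕ} (he : e ∈ E) :
    rank (E.image Prod.fst) e.1 = rank ((leading E).image (rankSum V)) (rankSum V e) := by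
  have hinj1 : Set.InjOn Prod.fst (leading E : Set (ℕ × ℕ)) := by
    intro a ha b hb hab
    obtain ⟨haE, ha⟩ := mem_filter.1 (mem_coe.1 ha)
    obtain ⟨hbE, hb⟩ := mem_filter.1 (mem_coe.1 hb)
    exact Prod.ext hab (le_antisymm (ha b hbE hab.symm) (hb a haE hab))
  have hinj2 : Set.InjOn (rankSum V) (leading E : Set (ℕ × ℕ)) := by
    intro a ha b hb hab
    have haE := (mem_filter.1 (mem_coe.1 ha)).1
    have hbE := (mem_filter.1 (mem_coe.1 hb)).1
    exact hinj1 ha hb (le_antisymm ((leading_le_iff hE hbE ha).2 hab.le)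
      ((leading_le_iff hE haE hb).2 hab.ge))
  have hsub (p : ℕ × ℕ → Prop) [DecidablePred p] :
      ((filter p (leading E) : Finset _) : Set (ℕ × ℕ)) ⊆ leading E :=
    coe_subset.2 (filter_subset _ _)
  rw [← leading_fst, rank, rank, filter_image, filter_image,
    card_image_of_injOn (hinj1.mono (hsub _)), card_image_of_injOn (hinj2.mono (hsub _))]
  congr 1
  exact filter_congr fun l hl => leading_le_iff hE he hl

lemma subset_of_code_eq {V : Finset ℕ} {E F : Finset (ℕ × ℕ)} (hE : E ∈ queuesOn V)
    (hF : F ∈ queuesOn V) (h : code V E = code V F) : E ⊆ F := by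
  simp only [code, Prod.mk.injEq] at h
  obtain ⟨hA, hS, hL⟩ := h
  intro e he
  obtain ⟨f, hf, hfe⟩ := mem_image.1 (hS ▸ mem_image_of_mem (rankSum V) he)
  have h1 := card_left_eq hE he
  rw [hA, hL, ← hfe, ← card_left_eq hF hf] at h1
  have h2 : e.1 = f.1 :=
    rank_inj _ (hA ▸ mem_image_of_mem _ he) (mem_image_of_mem _ hf) h1
  have heV := mem_product.1 ((mem_queuesOn.1 hE).1 he)
  have hfV := mem_product.1 ((mem_queuesOn.1 hF).1 hf)
  have h3 : e.2 = f.2 := by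
    apply rank_inj V heV.2 hfV.2
    simp only [rankSum, h2] at hfe
    omega
  rw [Prod.ext h2 h3]
  exact hf

lemma code_inj (V : Finset ℕ) : Set.InjOn (code V) (queuesOn V : Set (Finset (ℕ × ℕ))) :=
  fun _ hE _ hF h => Subset.antisymm (subset_of_code_eq hE hF h) (subset_of_code_eq hF hE h.symm)

lemma card_queuesOn_le (V : Finset ℕ) : #(queuesOn V) ≤ 32 ^ #V := by
  have hmaps : Set.MapsTo (code V) (queuesOn V : Set (Finset (ℕ × ℕ)))
      (V.powerset ×ˢ (Icc 1 (2 * #V)).powerset ×ˢ (Icc 1 (2 * #V)).powerset :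
        Finset (Finset ℕ × Finset ℕ × Finset ℕ)) := by
    intro E hE
    have hEV := (mem_queuesOn.1 (mem_coe.1 hE)).1
    have hS : E.image (rankSum V) ⊆ Icc 1 (2 * #V) := by
      intro s hs
      obtain ⟨e, he, rfl⟩ := mem_image.1 hs
      have h1 := rank_pos V (mem_product.1 (hEV he)).1
      have h2 := rank_le V e.1
      have h3 := rank_le V e.2
      rw [mem_Icc, rankSum]
      omega
    simp only [code, mem_coe, mem_product, mem_powerset]
    refine ⟨fun a ha => ?_, hS, (image_subset_image (filter_subset _ _)).trans hS⟩
    obtain ⟨e, he, rfl⟩ := mem_image.1 ha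
    exact (mem_product.1 (hEV he)).1
  have h := card_le_card_of_injOn (code V) hmaps (code_inj V)
  simp only [card_product, card_powerset, Nat.card_Icc, Nat.add_sub_cancel, pow_mul] at h
  rw [← mul_pow, ← mul_pow] at h
  exact h

lemma queueCountE_le_card {n m : ℕ} {T : Finset (Finset (ℕ × ℕ))}
    (h : ∀ E, IsOrderedGraph n E → IsQueue E → #E = m → E ∈ T) : queueCountE n m ≤ #T := by
  rw [queueCountE, ← Set.ncard_coe_finset]
  exact Set.ncard_le_ncard (fun E hE => h E hE.1 hE.2.1 hE.2.2) T.finite_toSet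

end QueueBound

open Finset QueueBound in
/-- There is an absolute constant `c > 0` such that: if `m ≤ n / 2` then
`g(n,m) ≤ C(n, 2m) * c ^ (2m)`, and for all `m` one has `g(n,m) ≤ c ^ n`. -/
theorem queueCountE_le :
    ∃ c : ℕ, 0 < c ∧ ∀ n m : ℕ,
      (2 * m ≤ n → queueCountE n m ≤ n.choose (2 * m) * c ^ (2 * m)) ∧
      queueCountE n m ≤ c ^ n := by
  refine ⟨32, by norm_num, fun n m => ⟨fun hm => ?_, ?_⟩⟩
  · calc queueCountE n m
        ≤ (((Icc 1 n).powersetCard (2 * m)).biUnion queuesOn).card := by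
          refine queueCountE_le_card fun E hG hQ hcard => ?_
          have hsub : E.image Prod.fst ∪ E.image Prod.snd ⊆ Icc 1 n := by
            intro x hx
            simp only [mem_union, mem_image] at hx
            rw [mem_Icc]
            rcases hx with ⟨e, he, rfl⟩ | ⟨e, he, rfl⟩ <;> have := hG e he <;> omega
          have hle : (E.image Prod.fst ∪ E.image Prod.snd).card ≤ 2 * m := by
            have h1 := card_union_le (E.image Prod.fst) (E.image Prod.snd)
            have h2 : (E.image Prod.fst).card ≤ E.card := card_image_le
            have h3 : (E.image Prod.snd).card ≤ E.card := card_image_le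
            omega
          obtain ⟨V, hV1, hV2, hV3⟩ :=
            exists_subsuperset_card_eq hsub hle (by simpa using hm)
          refine mem_biUnion.2 ⟨V, mem_powersetCard.2 ⟨hV2, hV3⟩, mem_queuesOn.2 ⟨?_, hQ⟩⟩
          exact fun e he => mem_product.2
            ⟨hV1 (mem_union_left _ (mem_image_of_mem _ he)),
              hV1 (mem_union_right _ (mem_image_of_mem _ he))⟩
      _ ≤ ((Icc 1 n).powersetCard (2 * m)).card * 32 ^ (2 * m) := by
          refine card_biUnion_le_card_mul _ _ _ fun V hV => ?_
          rw [← (mem_powersetCard.1 hV).2]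
          exact card_queuesOn_le V
      _ = n.choose (2 * m) * 32 ^ (2 * m) := by simp
  · calc queueCountE n m ≤ (queuesOn (Icc 1 n)).card := by
          refine queueCountE_le_card fun E hG hQ _ => mem_queuesOn.2 ⟨fun e he => ?_, hQ⟩
          have := hG e he
          rw [mem_product, mem_Icc, mem_Icc]
          omega
      _ ≤ 32 ^ (Icc 1 n).card := card_queuesOn_le _
      _ = 32 ^ n := by simp
end

section
/- There is an absolute constant c > 0 such that for all positive integers n, m, k with 2m ≤ k·n and k ≤ m, the number g(n,m,k) of k-queues on the vertex set {1,…,n} having exactly m edges is at most (c·k·n/m)^(2m). -/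
/-- `kQueueCountE n m k` is the number `g(n,m,k)` of `k`-queues on the vertex
set `{1, …, n}` having exactly `m` edges. -/
noncomputable def kQueueCountE (n m k : ℕ) : ℕ :=
  {E : Finset (ℕ × ℕ) | IsOrderedGraph n E ∧ E.card = m ∧ IsKQueue k E}.ncard

/-- The edges of a queue can be listed with both coordinates weakly increasing: the lexicographic
order works. -/
lemma IsQueue.exists_sorted_list {Q : Finset (ℕ × ℕ)} (hQ : IsQueue Q) :
    ∃ l : List (ℕ × ℕ), (l : Multiset (ℕ × ℕ)) = Q.val ∧
      (l.map Prod.fst).Pairwise (· ≤ ·) ∧ (l.map Prod.snd).Pairwise (· ≤ ·) := by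
  set l₀ : List (ℕ ×ₗ ℕ) := (Q.val.map toLex).sort (· ≤ ·) with hl₀
  have hcoe : ((l₀.map ofLex : List (ℕ × ℕ)) : Multiset (ℕ × ℕ)) = Q.val := by
    rw [← Multiset.map_coe, hl₀, Multiset.sort_eq, Multiset.map_map]
    exact Multiset.map_id _
  have hmem : ∀ a ∈ l₀, ofLex a ∈ Q := by
    intro a ha
    have : ofLex a ∈ ((l₀.map ofLex : List (ℕ × ℕ)) : Multiset (ℕ × ℕ)) := by
      exact List.mem_map_of_mem ha
    rw [hcoe] at this
    exact this
  have hsort : l₀.Pairwise (· ≤ ·) := Multiset.pairwise_sort _ _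
  refine ⟨l₀.map ofLex, hcoe, ?_, ?_⟩
  · rw [List.map_map, List.pairwise_map]
    refine hsort.imp ?_
    intro a b hab
    rcases (Prod.Lex.le_iff).1 hab with h | h
    · exact h.le
    · exact h.1.le
  · rw [List.map_map, List.pairwise_map]
    refine hsort.imp_of_mem ?_
    intro a b ha hb hab
    rcases (Prod.Lex.le_iff).1 hab with h | h
    · by_contra hlt
      exact hQ _ (hmem a ha) _ (hmem b hb) (Or.inl ⟨h, not_le.1 hlt⟩)
    · exact h.2

/-- A queue is determined by its multisets of left and of right endpoints. -/
lemma IsQueue.eq_of_map_eq {Q R : Finset (ℕ × ℕ)} (hQ : IsQueue Q) (hR : IsQueue R)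
    (h₁ : Q.val.map Prod.fst = R.val.map Prod.fst)
    (h₂ : Q.val.map Prod.snd = R.val.map Prod.snd) : Q = R := by
  obtain ⟨l, hl, hl₁, hl₂⟩ := hQ.exists_sorted_list
  obtain ⟨r, hr, hr₁, hr₂⟩ := hR.exists_sorted_list
  rw [← hl, ← hr, Multiset.map_coe, Multiset.map_coe, Multiset.coe_eq_coe] at h₁ h₂
  have e₁ := h₁.eq_of_pairwise' hl₁ hr₁
  have e₂ := h₂.eq_of_pairwise' hl₂ hr₂
  have hlr : l = r := by
    rw [← List.zip_unzip l, ← List.zip_unzip r, List.unzip_eq_map, List.unzip_eq_map, e₁, e₂]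
  apply Finset.val_injective
  rw [← hl, ← hr, hlr]

/-- A partition into at most `k` queues amounts to a colouring with queues as colour classes. -/
lemma IsKQueue.exists_coloring {k : ℕ} (hk : 0 < k) {E : Finset (ℕ × ℕ)} (hE : IsKQueue k E) :
    ∃ col : ℕ × ℕ → Fin k, ∀ i, IsQueue (E.filter fun e => col e = i) := by
  obtain ⟨parts, hcov, -, -, hq⟩ := hE
  have : ∀ e, ∃ i : Fin k, e ∈ E → e ∈ parts i := by
    intro e
    by_cases he : e ∈ E
    · obtain ⟨i, hi⟩ := hcov e he
      exact ⟨i, fun _ => hi⟩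
    · exact ⟨⟨0, hk⟩, fun h => absurd h he⟩
  choose col hcol using this
  refine ⟨col, fun i e he f hf => ?_⟩
  obtain ⟨he, hei⟩ := Finset.mem_filter.1 he
  obtain ⟨hf, hfi⟩ := Finset.mem_filter.1 hf
  exact hq i _ (hei ▸ hcol e he) _ (hfi ▸ hcol f hf)

/-- The endpoints (chosen by `p`) of one colour class, recovered from the multiset of all coloured
endpoints. -/
lemma map_filter_eq {k : ℕ} (E : Finset (ℕ × ℕ)) (col : ℕ × ℕ → Fin k) (p : ℕ × ℕ → ℕ)
    (i : Fin k) :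
    (E.filter fun e => col e = i).val.map p =
      ((E.val.map fun e => (col e, p e)).filter fun x => x.1 = i).map Prod.snd := by
  rw [Multiset.filter_map, Multiset.map_map]
  rfl

/-- Decoding the vertex labels `v - 1 : Fin n` back to `v`. -/
lemma map_decode {n k : ℕ} [NeZero n] (E : Finset (ℕ × ℕ)) (col : ℕ × ℕ → Fin k) (p : ℕ × ℕ → ℕ)
    (hp : ∀ e ∈ E, 1 ≤ p e ∧ p e ≤ n) :
    (E.val.map fun e => (col e, Fin.ofNat n (p e - 1))).map (fun x => (x.1, x.2.val + 1)) =
      E.val.map fun e => (col e, p e) := by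
  rw [Multiset.map_map]
  refine Multiset.map_congr rfl fun e he => ?_
  have := hp e he
  have hlt : p e - 1 < n := by omega
  simp only [Function.comp, Fin.val_ofNat, Nat.mod_eq_of_lt hlt]
  congr 1
  omega

/-- A `k`-queue is encoded by its coloured left endpoints and its coloured right endpoints, two
multisets of size `m` over `Fin k × Fin n`. -/
lemma kQueueCountE_le_multichoose {n m k : ℕ} (hn : 0 < n) (hk : 0 < k) :
    kQueueCountE n m k ≤ (k * n).multichoose m ^ 2 := by
  have : NeZero n := ⟨hn.ne'⟩
  let S : Set (Finset (ℕ × ℕ)) := {E | IsOrderedGraph n E ∧ E.card = m ∧ IsKQueue k E}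
  have hcol : ∀ E : S, ∃ col : ℕ × ℕ → Fin k, ∀ i, IsQueue (E.1.filter fun e => col e = i) :=
    fun E => E.2.2.2.exists_coloring hk
  choose col hq using hcol
  let code (p : ℕ × ℕ → ℕ) (E : S) : Sym (Fin k × Fin n) m :=
    ⟨E.1.val.map fun e => (col E e, Fin.ofNat n (p e - 1)), by
      rw [Multiset.card_map]; exact E.2.2.1⟩
  have hcode : ∀ p : ℕ × ℕ → ℕ, (∀ E ∈ S, ∀ e ∈ E, 1 ≤ p e ∧ p e ≤ n) → ∀ E F : S,
      code p E = code p F → ∀ i, (E.1.filter fun e => col E e = i).val.map p =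
        (F.1.filter fun e => col F e = i).val.map p := by
    intro p hp E F h i
    rw [map_filter_eq, map_filter_eq, ← map_decode (n := n) E.1 _ _ (hp E.1 E.2),
      ← map_decode (n := n) F.1 _ _ (hp F.1 F.2)]
    have h' := congrArg Subtype.val h
    simp only [code] at h'
    rw [h']
  have hinj : Function.Injective fun E : S => (code Prod.fst E, code Prod.snd E) := by
    intro E F h
    obtain ⟨h₁, h₂⟩ := Prod.ext_iff.1 h
    have hclass : ∀ i, (E.1.filter fun e => col E e = i) = F.1.filter fun e => col F e = i := by
      intro i
      refine (hq E i).eq_of_map_eq (hq F i)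
        (hcode Prod.fst (fun G hG e he => ?_) E F h₁ i)
        (hcode Prod.snd (fun G hG e he => ?_) E F h₂ i)
      · have := hG.1 e he
        omega
      · have := hG.1 e he
        omega
    ext e
    constructor
    · intro he
      have : e ∈ E.1.filter fun e' => col E e' = col E e := Finset.mem_filter.2 ⟨he, rfl⟩
      rw [hclass] at this
      exact (Finset.mem_filter.1 this).1
    · intro he
      have : e ∈ F.1.filter fun e' => col F e' = col F e := Finset.mem_filter.2 ⟨he, rfl⟩
      rw [← hclass] at this
      exact (Finset.mem_filter.1 this).1
  calc kQueueCountE n m k = Nat.card S := rfl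
    _ ≤ Nat.card (Sym (Fin k × Fin n) m × Sym (Fin k × Fin n) m) :=
        Nat.card_le_card_of_injective _ hinj
    _ = (k * n).multichoose m ^ 2 := by
        rw [Nat.card_prod, Nat.card_eq_fintype_card, Sym.card_sym_eq_multichoose,
          Fintype.card_prod, Fintype.card_fin, Fintype.card_fin, sq]

lemma multichoose_le_pow {N m : ℕ} (hm : 0 < m) (hN : m ≤ N) :
    (N.multichoose m : ℝ) ≤ (2 * Real.exp 1 * N / m) ^ m := by
  have hm' : (0 : ℝ) < m := by exact_mod_cast hm
  have hfac : (0 : ℝ) < (m.factorial : ℝ) := by exact_mod_cast m.factorial_pos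
  have hexp := Real.pow_div_factorial_le_exp (m : ℝ) hm'.le m
  rw [← Real.exp_one_pow] at hexp
  have hle : ((N + m - 1 : ℕ) : ℝ) ≤ 2 * N := by
    exact_mod_cast (by omega : N + m - 1 ≤ 2 * N)
  calc (N.multichoose m : ℝ) = ((N + m - 1).choose m : ℝ) := by rw [Nat.multichoose_eq]
    _ ≤ ((N + m - 1 : ℕ) : ℝ) ^ m / m.factorial := Nat.choose_le_pow_div m _
    _ ≤ (2 * N : ℝ) ^ m / m.factorial := by gcongr
    _ = (2 * N / m : ℝ) ^ m * ((m : ℝ) ^ m / m.factorial) := by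
        rw [div_pow]; field_simp
    _ ≤ (2 * N / m : ℝ) ^ m * Real.exp 1 ^ m := by gcongr
    _ = (2 * Real.exp 1 * N / m) ^ m := by rw [← mul_pow]; congr 1; ring

/-- There is an absolute constant `c > 0` such that for all positive integers
`n`, `m`, `k` with `2m ≤ k * n` and `k ≤ m`, the number of `k`-queues on
`{1, …, n}` with exactly `m` edges is at most `(c * k * n / m) ^ (2 * m)`. -/
theorem kQueueCountE_le :
    ∃ c : ℝ, 0 < c ∧ ∀ n m k : ℕ, 0 < n → 0 < m → 0 < k →
      2 * m ≤ k * n → k ≤ m →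
      (kQueueCountE n m k : ℝ) ≤ (c * k * n / m) ^ (2 * m) := by
  refine ⟨2 * Real.exp 1, by positivity, fun n m k hn hm hk hmk _ => ?_⟩
  calc (kQueueCountE n m k : ℝ) ≤ (((k * n).multichoose m : ℕ) : ℝ) ^ 2 := by
        exact_mod_cast kQueueCountE_le_multichoose hn hk
    _ ≤ ((2 * Real.exp 1 * ((k * n : ℕ) : ℝ) / m) ^ m) ^ 2 := by
        gcongr
        exact multichoose_le_pow hm (by omega)
    _ = (2 * Real.exp 1 * k * n / m) ^ (2 * m) := by
        rw [← pow_mul, mul_comm m 2]; push_cast; congr 1; ring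
end
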